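/- For all integers n ≥ 1 and n ≥ m ≥ 0, the generalized net GN_{n,m} is Schur-positive; that is, [s_λ]X_{GN_{n,m}} ≥ 0 for every partition λ of n+m. -/

import Mathlib

open scoped Classical

/-! ### Cells and Young diagrams -/

/-- A cell of a Young diagram: `(row, column)`, both 0-indexed, rows from the top. -/
abbrev Cell : Type := ℕ × ℕ

/-- The length of row `i` (0-indexed from the top) of the Young diagram of the
partition `lam`, whose parts are arranged in weakly decreasing order. -/
def rowLen {N : ℕ} (lam : Nat.Partition N) (i : ℕ) : ℕ :=
  ((lam.parts.sort (· ≤ ·)).reverse).getD i 0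

/-- The Young diagram of a partition, as a set of cells. -/
def diag {N : ℕ} (lam : Nat.Partition N) : Set Cell :=
  {c : Cell | c.2 < rowLen lam c.1}

/-- The number of rows (the length) of a partition. -/
def numRows {N : ℕ} (lam : Nat.Partition N) : ℕ := Multiset.card lam.parts

/-! ### Chromatic symmetric functions and Schur functions, as monomial-coefficient
functions.  A formal power series of bounded degree in the commuting variables
`x_0, x_1, x_2, …` is recorded by the map sending an exponent vector `μ : ℕ → ℕ`
(only finitely many nonzero entries ever matter) to the coefficient of the monomial
`∏ i, x_i ^ μ i`.  Colors / tableau entries are positive integers, so the variable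
`x_0` is never used. -/

/-- A proper coloring of `G` by positive integers. -/
def IsProperColoring {V : Type*} (G : SimpleGraph V) (f : V → ℕ) : Prop :=
  (∀ v, 0 < f v) ∧ ∀ u v, G.Adj u v → f u ≠ f v

/-- The coefficient of the monomial `∏ i, x_i ^ μ i` in the chromatic symmetric
function `X_G = ∑_{proper colorings f} ∏_{v} x_{f v}`. -/
noncomputable def XCoeff {V : Type*} [Fintype V] (G : SimpleGraph V) (μ : ℕ → ℕ) : ℚ :=
  Nat.card {f : V → ℕ //
    IsProperColoring G f ∧ ∀ i, Nat.card {v : V // f v = i} = μ i}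

/-- A semistandard Young tableau of shape `lam`: positive entries on the diagram
(normalized to `0` off the diagram), weakly increasing along rows, strictly
increasing down columns. -/
def IsSSYT {N : ℕ} (lam : Nat.Partition N) (t : Cell → ℕ) : Prop :=
  (∀ c, c ∉ diag lam → t c = 0) ∧ (∀ c ∈ diag lam, 0 < t c) ∧
  (∀ i j : ℕ, ((i, j + 1) : Cell) ∈ diag lam → t (i, j) ≤ t (i, j + 1)) ∧
  (∀ i j : ℕ, ((i + 1, j) : Cell) ∈ diag lam → t (i, j) < t (i + 1, j))

/-- The coefficient of the monomial `∏ i, x_i ^ μ i` in the Schur function `s_lam`,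
i.e. the number of SSYT of shape `lam` and weight `μ`. -/
noncomputable def schurFn {N : ℕ} (lam : Nat.Partition N) (μ : ℕ → ℕ) : ℚ :=
  Nat.card {t : Cell → ℕ // IsSSYT lam t ∧
    ∀ i, Nat.card {c : Cell // c ∈ diag lam ∧ t c = i} = μ i}

/-- The coefficient `[s_lam] f` of the Schur function `s_lam` in the (unique, when it
exists) expansion `f = ∑_{ν ⊢ N} c_ν s_ν` of a symmetric function `f`, homogeneous of
degree `N`, given by its monomial coefficients. -/
noncomputable def sCoeff {N : ℕ} (f : (ℕ → ℕ) → ℚ) (lam : Nat.Partition N) : ℚ :=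
  if h : ∃ c : Nat.Partition N →₀ ℚ, ∀ μ, f μ = c.sum fun ν a => a * schurFn ν μ
  then h.choose lam else 0

/-! ### Graphs: generalized nets, generalized spiders, disjoint unions -/

/-- The generalized net `GN_{n,m}`: the complete graph on the body `Fin n`, with a
pendant (`Sum.inr j`) attached to the anchor `Sum.inl j` for each `j : Fin m`. -/
def genNet (n m : ℕ) : SimpleGraph (Fin n ⊕ Fin m) :=
  SimpleGraph.fromRel fun a b =>
    match a, b with
    | Sum.inl _, Sum.inl _ => True
    | Sum.inl i, Sum.inr j => (i : ℕ) = (j : ℕ)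
    | Sum.inr _, _ => False

/-- The generalized spider `GS_{n,(2,1^{m-1})}`: the complete graph on the body
`Fin n`, a pendant `Sum.inr (Sum.inl j)` attached to the body vertex `Sum.inl j` for
each `j : Fin m`, and one extra vertex `Sum.inr (Sum.inr 0)` (the special pendant)
attached to the pendant `Sum.inr (Sum.inl 0)`, so that the body vertex `0` (the
special anchor) carries an attached path on two vertices. -/
def genSpider2 (n m : ℕ) : SimpleGraph (Fin n ⊕ (Fin m ⊕ Fin 1)) :=
  SimpleGraph.fromRel fun a b =>
    match a, b with
    | Sum.inl _, Sum.inl _ => True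
    | Sum.inl i, Sum.inr (Sum.inl j) => (i : ℕ) = (j : ℕ)
    | Sum.inr (Sum.inl j), Sum.inr (Sum.inr _) => (j : ℕ) = 0
    | _, _ => False

/-- Disjoint union of two simple graphs. -/
def disjUnion {α β : Type*} (G : SimpleGraph α) (H : SimpleGraph β) :
    SimpleGraph (α ⊕ β) :=
  SimpleGraph.fromRel fun a b =>
    match a, b with
    | Sum.inl a, Sum.inl b => G.Adj a b
    | Sum.inr a, Sum.inr b => H.Adj a b
    | _, _ => False

/-- The one-vertex graph `K_1`. -/
def K1 : SimpleGraph (Fin 1) := ⊥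

/-- The path (= complete graph) on two vertices `P_2`. -/
def P2 : SimpleGraph (Fin 2) := ⊤

/-! ### Operations on partitions -/

/-- `removeOnes lam t` is the partition `lam ∖ 1^t` obtained by deleting `t` parts
equal to `1` from `lam` (junk value if `lam` has fewer than `t` parts equal to `1`). -/
def removeOnes {N : ℕ} (lam : Nat.Partition N) (t : ℕ) : Nat.Partition (N - t) :=
  if h : Multiset.replicate t 1 ≤ lam.parts then
    { parts := lam.parts - Multiset.replicate t 1
      parts_pos := fun hx =>
        lam.parts_pos (Multiset.mem_of_le (tsub_le_self) hx)
      parts_sum := by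
        have h1 : (lam.parts - Multiset.replicate t 1) + Multiset.replicate t 1
            = lam.parts := tsub_add_cancel_of_le h
        have h2 := congrArg Multiset.sum h1
        rw [Multiset.sum_add, Multiset.sum_replicate, lam.parts_sum] at h2
        simp only [smul_eq_mul, mul_one] at h2
        omega }
  else Nat.Partition.indiscrete (N - t)

/-- The partition `(2^a, 1^b)` of `2*a + b`. -/
def twoOne (a b : ℕ) : Nat.Partition (2 * a + b) where
  parts := Multiset.replicate a 2 + Multiset.replicate b 1
  parts_pos := by
    intro i hi
    rw [Multiset.mem_add] at hi
    rcases hi with hi | hi <;> · rw [Multiset.eq_of_mem_replicate hi]; omega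
  parts_sum := by
    rw [Multiset.sum_add, Multiset.sum_replicate, Multiset.sum_replicate]
    simp only [smul_eq_mul, mul_one]
    omega

/-! ### Special rim hook `G`-tabloids -/

/-- Two cells are adjacent if they share an edge. -/
def cellAdj (c d : Cell) : Prop :=
  (c.1 = d.1 ∧ (c.2 + 1 = d.2 ∨ d.2 + 1 = c.2)) ∨
  (c.2 = d.2 ∧ (c.1 + 1 = d.1 ∨ d.1 + 1 = c.1))

/-- A set of cells is (the diagram of) a Young diagram if it is closed under
decreasing either coordinate. -/
def IsYoungDiag (D : Set Cell) : Prop :=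
  ∀ i j i' j' : ℕ, ((i, j) : Cell) ∈ D → i' ≤ i → j' ≤ j → ((i', j') : Cell) ∈ D

/-- A set of cells is connected (via edge-adjacency, within the set). -/
def CellConnected (S : Set Cell) : Prop :=
  ∀ c ∈ S, ∀ d ∈ S, Relation.ReflTransGen (fun a b => a ∈ S ∧ b ∈ S ∧ cellAdj a b) c d

/-- A border strip (= rim hook, as a set of cells): nonempty, connected, and
containing no 2×2 square of cells. -/
def IsBorderStrip (H : Set Cell) : Prop :=
  H.Nonempty ∧ CellConnected H ∧
    ∀ i j : ℕ, ¬(((i, j) : Cell) ∈ H ∧ ((i + 1, j) : Cell) ∈ H ∧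
      ((i, j + 1) : Cell) ∈ H ∧ ((i + 1, j + 1) : Cell) ∈ H)

/-- `H` is a rim hook of the Young diagram `D`: a border strip contained in `D`
whose removal leaves a Young diagram. -/
def IsRimHookOf (D H : Set Cell) : Prop :=
  H ⊆ D ∧ IsBorderStrip H ∧ IsYoungDiag (D \ H)

/-- `IsRemovalSeq L D` says that the sets of cells in the list `L` may be removed
successively from the diagram `D`, each being a rim hook of what remains, with
nothing left at the end. -/
def IsRemovalSeq : List (Set Cell) → Set Cell → Prop
  | [], D => D = ∅
  | H :: L, D => IsRimHookOf D H ∧ IsRemovalSeq L (D \ H)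

/-- A special rim hook `G`-tabloid of shape `lam`, with respect to an order `r` on
the vertices of `G`: the cells of the diagram of `lam` are filled bijectively with
the vertices of `G` (vertex `v` goes in cell `pos v`), and the diagram is tiled by
rim hooks, successively removable, each meeting the first column.  The rim hooks are
recorded by the labelling `hk`, which assigns to each vertex the topmost row in which
its rim hook meets the first column.  The vertices in each rim hook form a stable set
of `G` and, read from the rim hook's (bottom) cell in the first column — i.e. in
increasing order of the diagonal index `column − row` — they increase with respect
to `r`. -/
structure SRHGTabloid {V : Type*} (G : SimpleGraph V) (r : V → V → Prop)
    {N : ℕ} (lam : Nat.Partition N) where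
  /-- the cell occupied by each vertex -/
  pos : V → Cell
  /-- the label of the rim hook containing each vertex: the topmost row in which
  that rim hook meets the first column -/
  hk : V → ℕ
  pos_inj : Function.Injective pos
  pos_range : Set.range pos = diag lam
  hk_mem : ∀ v, ((hk v, 0) : Cell) ∈ pos '' {u | hk u = hk v}
  hk_min : ∀ v i, ((i, 0) : Cell) ∈ pos '' {u | hk u = hk v} → hk v ≤ i
  removal : ∃ L : List ℕ, L.Nodup ∧ (∀ i, i ∈ L ↔ ∃ v, hk v = i) ∧
    IsRemovalSeq (L.map fun i => pos '' {u | hk u = i}) (diag lam)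
  stable : ∀ u v, hk u = hk v → u ≠ v → ¬G.Adj u v
  increasing : ∀ u v, hk u = hk v →
    ((pos u).2 : ℤ) - ((pos u).1 : ℤ) < ((pos v).2 : ℤ) - ((pos v).1 : ℤ) → r u v

/-- The sign of a special rim hook `G`-tabloid: `(-1)` to the total number of north
steps, where a rim hook spanning `k` rows contributes `k - 1` north steps. -/
noncomputable def tabSign {V : Type*} {G : SimpleGraph V} {r : V → V → Prop}
    {N : ℕ} {lam : Nat.Partition N} (T : SRHGTabloid G r lam) : ℤ :=
  (-1) ^ ∑ i ∈ Finset.range N,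
    ({a : ℕ | ∃ v, T.hk v = i ∧ (T.pos v).1 = a}.ncard - 1)

/-- The cells of the head of a tabloid of shape `lam`: the rows of length `≥ 2`. -/
def headCells {N : ℕ} (lam : Nat.Partition N) : Set Cell :=
  {c : Cell | c ∈ diag lam ∧ 2 ≤ rowLen lam c.1}

/-- The cells of the tail of a tabloid of shape `lam`: the rows of length `1`. -/
def tailCells {N : ℕ} (lam : Nat.Partition N) : Set Cell :=
  {c : Cell | c ∈ diag lam ∧ rowLen lam c.1 = 1}

/-- Two special rim hook `G`-tabloids have the same head: the same cells of the head
are occupied by the same vertices, and the rim hook structure restricted to the head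
agrees. -/
def SameHead {V : Type*} {G : SimpleGraph V} {r : V → V → Prop} {N : ℕ}
    {lam : Nat.Partition N} (T T' : SRHGTabloid G r lam) : Prop :=
  (∀ v, T.pos v ∈ headCells lam ↔ T'.pos v ∈ headCells lam) ∧
  (∀ v, T.pos v ∈ headCells lam → T.pos v = T'.pos v) ∧
  (∀ u v, T.pos u ∈ headCells lam → T.pos v ∈ headCells lam →
    (T.hk u = T.hk v ↔ T'.hk u = T'.hk v))

/-!
Given a coloring of the body of `GN_{m+b,m}`, a pendant at an anchor of color `i` may take any other
color, so
`X = m! b! ∑_{A, B disjoint, #A = m, #B = b} ∏_{i ∈ A} (p₁ x_i - x_i²) ∏_{i ∈ B} x_i`.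
Adding the variables one at a time identifies this double sum with
`∑_{i+j=m} (-1)^j C(i+b, b) (p₁ + E)^i s_{n,j}` at `n = m + b`, where `s_{n,j}` is the Schur
function of the shape with columns of heights `n ≥ j` and `E` is the shift `n ↦ n + 1`.

Multiplication by the Vandermonde determinant turns `s_{n,j}` into an alternant, and sums of
alternants with strictly decreasing exponents are stable under multiplication by `p₁`. The
difference `(p₁ + E)^{k+1} s_{n,j} - (p₁ + E)^k s_{n,j+1}` is again such a sum, because `s_{n,j+1}`
is one of the terms of `p₁ s_{n,j}`. As the binomial coefficients decrease with `j` as well, pairing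
consecutive terms shows that the alternating sum is a sum of alternants. By the bialternant formula,
the coefficient of `s_λ` in `X` is that of the monomial `x^{λ+δ}` in the product of `X` and the
Vandermonde determinant, hence nonnegative.
-/

open Finset

/-! ### Alternants -/

section Alternant

variable {R ι : Type*} [CommRing R]

/-- The elementary symmetric polynomial `e_k` in the variables `y i`, `i ∈ s`. -/
def esymmOn (y : ι → R) (s : Finset ι) (k : ℕ) : R := (s.1.map y).esymm k

lemma esymmOn_eq_sum (y : ι → R) (s : Finset ι) (k : ℕ) :
    esymmOn y s k = ∑ t ∈ s.powersetCard k, ∏ i ∈ t, y i :=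
  Finset.esymm_map_val y s k

lemma esymmOn_zero (y : ι → R) (s : Finset ι) : esymmOn y s 0 = 1 := by
  simp [esymmOn_eq_sum]

lemma esymmOn_empty_succ (y : ι → R) (k : ℕ) : esymmOn y ∅ (k + 1) = 0 := by
  rw [esymmOn_eq_sum, powersetCard_eq_empty.mpr (by simp), sum_empty]

lemma esymmOn_one (y : ι → R) (s : Finset ι) : esymmOn y s 1 = ∑ i ∈ s, y i := by
  simp [esymmOn_eq_sum, powersetCard_one]

lemma esymmOn_univ_comp_perm [Fintype ι] (y : ι → R) (σ : Equiv.Perm ι) (k : ℕ) :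
    esymmOn (y ∘ σ) univ k = esymmOn y univ k := by
  have hσ : Multiset.map σ univ.val = univ.val := congrArg val (map_univ_equiv σ)
  rw [esymmOn, esymmOn, ← Multiset.map_map, hσ]

variable [Fintype ι] [DecidableEq ι]

/-- The alternant `a_α = det (y_i ^ α_j)`. -/
def alternant (y : ι → R) (α : ι → ℕ) : R := (Matrix.of fun i j => y i ^ α j).det

lemma alternant_eq_sum_perm (y : ι → R) (α : ι → ℕ) :
    alternant y α = ∑ σ : Equiv.Perm ι, ((σ.sign : ℤ) : R) * ∏ i, y (σ i) ^ α i := by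
  simp [alternant, Matrix.det_apply']

lemma alternant_eq_zero_of_not_injective (y : ι → R) {α : ι → ℕ}
    (hα : ¬ Function.Injective α) : alternant y α = 0 := by
  obtain ⟨i, j, hij, hne⟩ := Function.not_injective_iff.mp hα
  exact Matrix.det_zero_of_column_eq hne fun k => by simp [hij]

lemma esymmOn_mul_alternant (y : ι → R) (α : ι → ℕ) (k : ℕ) :
    esymmOn y univ k * alternant y α =
      ∑ B ∈ (univ : Finset ι).powersetCard k, alternant y (α + Set.indicator B 1) := by
  simp only [alternant_eq_sum_perm, mul_sum]
  rw [sum_comm]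
  refine sum_congr rfl fun σ _ => ?_
  rw [← esymmOn_univ_comp_perm y σ, esymmOn_eq_sum, sum_mul]
  refine sum_congr rfl fun B _ => ?_
  have hB : ∏ i, y (σ i) ^ (B : Set ι).indicator 1 i = ∏ i ∈ B, y (σ i) := by
    simp [Set.indicator_apply, pow_ite, prod_ite_mem]
  simp only [Pi.add_apply, pow_add, prod_mul_distrib, hB, Function.comp_apply]
  ring

lemma sum_mul_alternant (y : ι → R) (α : ι → ℕ) :
    (∑ i, y i) * alternant y α = ∑ i, alternant y (α + Set.indicator {i} 1) := by
  rw [← esymmOn_one, esymmOn_mul_alternant, powersetCard_one, sum_map]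
  simp

end Alternant

section AlternantCone

variable {R : Type*} [CommRing R] {r : ℕ} (y : Fin r → R)

/-- The additive monoid generated by the alternants with strictly decreasing exponents. As
`a_{λ+δ} = s_λ a_δ`, it is the set of all `f * a_δ` with `f` Schur-positive. -/
def alternantCone : AddSubmonoid R :=
  AddSubmonoid.closure (alternant y '' {α | StrictAnti α})

variable {y}

lemma alternant_mem_cone {α : Fin r → ℕ} (hα : StrictAnti α) : alternant y α ∈ alternantCone y :=
  AddSubmonoid.subset_closure ⟨α, hα, rfl⟩

lemma alternant_add_indicator_mem_cone {α : Fin r → ℕ} (hα : StrictAnti α) (B : Set (Fin r)) :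
    alternant y (α + B.indicator 1) ∈ alternantCone y := by
  by_cases hinj : Function.Injective (α + B.indicator 1)
  · refine alternant_mem_cone (Antitone.strictAnti_of_injective (fun i j hij => ?_) hinj)
    rcases hij.eq_or_lt with rfl | hlt
    · rfl
    · have := hα hlt
      simp only [Pi.add_apply, Set.indicator_apply, Pi.one_apply]
      split_ifs <;> omega
  · rw [alternant_eq_zero_of_not_injective y hinj]
    exact zero_mem _

lemma sum_mul_mem_cone {x : R} (hx : x ∈ alternantCone y) : (∑ i, y i) * x ∈ alternantCone y := by
  induction hx using AddSubmonoid.closure_induction with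
  | mem x hx =>
    obtain ⟨α, hα, rfl⟩ := hx
    rw [sum_mul_alternant]
    exact sum_mem fun i _ => alternant_add_indicator_mem_cone hα _
  | zero => simp
  | add x x' _ _ hx hx' => rw [mul_add]; exact add_mem hx hx'

end AlternantCone

section TwoColumn

lemma eq_Ico_of_forall_succ_mem {a : ℕ} {s : Finset ℕ} (ha : ∀ k ∈ s, a ≤ k)
    (hs : ∀ k, a ≤ k → k + 1 ∈ s → k ∈ s) : s = Ico a (a + #s) := by
  refine eq_of_subset_of_card_le (fun k hk => ?_) (by simp)
  have hsub : Ico a (k + 1) ⊆ s := fun l hl => by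
    rw [mem_Ico, Nat.lt_succ_iff] at hl
    exact Nat.decreasingInduction' (fun i _ hli hi => hs i (hl.1.trans hli) hi) hl.2 hk
  have hcard := card_le_card hsub
  rw [Nat.card_Ico] at hcard
  have := ha k hk
  exact mem_Ico.mpr (by omega)

lemma eq_range_union_Ico_of_forall_succ_mem {a : ℕ} {s : Finset ℕ}
    (hs : ∀ k, k + 1 ≠ a → k + 1 ∈ s → k ∈ s) :
    ∃ p ≤ min a #s, s = range p ∪ Ico a (a + #s - p) := by
  have hlow : {k ∈ s | k < a} = Ico 0 (0 + #{k ∈ s | k < a}) :=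
    eq_Ico_of_forall_succ_mem (by simp) fun k _ hk => by
      rw [mem_filter] at hk ⊢
      exact ⟨hs k (by omega) hk.1, by omega⟩
  have hhigh : {k ∈ s | ¬ k < a} = Ico a (a + #{k ∈ s | ¬ k < a}) :=
    eq_Ico_of_forall_succ_mem (by simp) fun k hak hk => by
      rw [mem_filter] at hk ⊢
      exact ⟨hs k (by omega) hk.1, by omega⟩
  have hcard : #{k ∈ s | k < a} + #{k ∈ s | ¬ k < a} = #s := card_filter_add_card_filter_not _
  have hle : #{k ∈ s | k < a} ≤ #(range a) :=
    card_le_card fun k hk => mem_range.mpr (mem_filter.mp hk).2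
  rw [card_range] at hle
  refine ⟨#{k ∈ s | k < a}, by omega, ?_⟩
  rw [show a + #s - #{k ∈ s | k < a} = a + #{k ∈ s | ¬ k < a} by omega, ← hhigh, range_eq_Ico,
    ← zero_add (#{k ∈ s | k < a}), ← hlow, filter_union_filter_not_eq]

/-- The exponents `λ + δ` for the partition `λ` of at most `r` parts whose Young diagram has
columns of heights `a` and `c`. -/
def twoColumnExponent (r a c : ℕ) (i : Fin r) : ℕ :=
  (if i < a then 1 else 0) + (if i < c then 1 else 0) + i.rev

lemma twoColumnExponent_strictAnti (r a c : ℕ) : StrictAnti (twoColumnExponent r a c) := by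
  intro i j hij
  have := i.is_lt
  simp only [twoColumnExponent, Fin.val_rev]
  split_ifs <;> omega

lemma twoColumnExponent_zero_zero (r : ℕ) : twoColumnExponent r 0 0 = fun i => (i.rev : ℕ) := by
  simp [funext_iff, twoColumnExponent]

lemma twoColumnExponent_add_indicator_singleton {r : ℕ} (a : ℕ) (i : Fin r) :
    twoColumnExponent r a i + Set.indicator {i} 1 = twoColumnExponent r a (i + 1) := by
  ext j
  simp only [twoColumnExponent, Pi.add_apply, Set.indicator_apply, Set.mem_singleton_iff,
    Pi.one_apply, Fin.ext_iff]
  split_ifs <;> omega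

/-- The rows of the vertical strip of `b` boxes whose addition to a single column of height `a`
gives columns of heights `a + b - p` and `p`. -/
def verticalStrip (r a b p : ℕ) : Finset (Fin r) :=
  {i | (i : ℕ) < p ∨ a ≤ i ∧ i < a + b - p}

variable {r a b p : ℕ}

lemma map_val_verticalStrip (hp : p ≤ b) (hr : a + b ≤ r) :
    (verticalStrip r a b p).map Fin.valEmbedding = range p ∪ Ico a (a + b - p) := by
  ext k
  simp only [verticalStrip, mem_map, mem_filter_univ, Fin.valEmbedding_apply, mem_union, mem_range,
    mem_Ico]
  constructor
  · rintro ⟨i, hi, rfl⟩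
    exact hi
  · exact fun hk => ⟨⟨k, by omega⟩, hk, rfl⟩

lemma card_verticalStrip (hpa : p ≤ a) (hpb : p ≤ b) (hr : a + b ≤ r) :
    #(verticalStrip r a b p) = b := by
  have hdisj : Disjoint (range p) (Ico a (a + b - p)) := by
    simp only [disjoint_left, mem_range, mem_Ico]
    omega
  rw [← card_map Fin.valEmbedding, map_val_verticalStrip hpb hr, card_union_of_disjoint hdisj,
    card_range, Nat.card_Ico]
  omega

lemma twoColumnExponent_add_indicator_verticalStrip (hpa : p ≤ a) (hpb : p ≤ b) :
    twoColumnExponent r a 0 + Set.indicator (verticalStrip r a b p) 1 =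
      twoColumnExponent r (a + b - p) p := by
  ext i
  simp only [twoColumnExponent, verticalStrip, Pi.add_apply, Set.indicator_apply, coe_filter_univ,
    Set.mem_ofPred_eq, Pi.one_apply]
  split_ifs <;> omega

lemma eq_verticalStrip_of_injective {B : Finset (Fin r)} (hr : a + #B ≤ r)
    (hB : Function.Injective (twoColumnExponent r a 0 + Set.indicator B 1)) :
    ∃ p ≤ min a #B, B = verticalStrip r a #B p := by
  have mem_of_succ_mem (k : ℕ) (hk : k + 1 ≠ a) (hkB : k + 1 ∈ B.map Fin.valEmbedding) :
      k ∈ B.map Fin.valEmbedding := by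
    obtain ⟨i, hi, hik⟩ := mem_map.mp hkB
    rw [Fin.valEmbedding_apply] at hik
    by_contra hk'
    have hi' : (⟨k, by omega⟩ : Fin r) ∉ B := fun h => hk' (mem_map.mpr ⟨_, h, rfl⟩)
    have heq : i = ⟨k, by omega⟩ := hB <| by
      simp only [twoColumnExponent, Pi.add_apply, Set.indicator_apply, mem_coe, hi, hi', hik,
        Pi.one_apply, Fin.val_rev, if_true, if_false]
      split_ifs <;> omega
    simp [heq] at hik
  obtain ⟨p, hp, hBp⟩ := eq_range_union_Ico_of_forall_succ_mem mem_of_succ_mem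
  rw [card_map] at hp hBp
  refine ⟨p, hp, map_injective Fin.valEmbedding ?_⟩
  rw [hBp, map_val_verticalStrip (by omega) hr]

lemma esymmOn_mul_alternant_twoColumnExponent {R : Type*} [CommRing R] (y : Fin r → R)
    (hr : a + b ≤ r) :
    esymmOn y univ b * alternant y (twoColumnExponent r a 0) =
      ∑ p ∈ range (min a b + 1), alternant y (twoColumnExponent r (a + b - p) p) := by
  rw [esymmOn_mul_alternant]
  symm
  refine sum_of_injOn (verticalStrip r a b) ?_ ?_ ?_ ?_
  · intro p hp q hq heq
    have heq' := congrArg (map Fin.valEmbedding) heq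
    simp only [coe_range, Set.mem_Iio] at hp hq
    rw [map_val_verticalStrip (by omega) hr, map_val_verticalStrip (by omega) hr] at heq'
    have hp' := Finset.ext_iff.mp heq' p
    have hq' := Finset.ext_iff.mp heq' q
    simp only [mem_union, mem_range, mem_Ico] at hp' hq'
    omega
  · intro p hp
    simp only [coe_range, Set.mem_Iio] at hp
    simpa [mem_powersetCard] using card_verticalStrip (by omega) (by omega) hr
  · intro B hB hB'
    obtain rfl := (mem_powersetCard.mp hB).2
    refine alternant_eq_zero_of_not_injective y fun hinj => hB' ?_
    obtain ⟨p, hp, hBp⟩ := eq_verticalStrip_of_injective hr hinj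
    exact ⟨p, by simp; omega, hBp.symm⟩
  · intro p hp
    rw [mem_range] at hp
    rw [twoColumnExponent_add_indicator_verticalStrip (by omega) (by omega)]

end TwoColumn

/-! ### Sums over pairs of disjoint sets -/

section Insertion

variable {R ι : Type*} [CommRing R]

/-- The Schur polynomial, in the variables `y i`, `i ∈ s`, of the partition whose diagram has
columns of heights `n ≥ j`, as given by the dual Jacobi–Trudi formula. -/
def twoColumnSchur (y : ι → R) (s : Finset ι) : ℕ → ℕ → R
  | 0, n => esymmOn y s n
  | j + 1, n => esymmOn y s n * esymmOn y s (j + 1) - esymmOn y s (n + 1) * esymmOn y s j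

lemma twoColumnSchur_succ_self (y : ι → R) (s : Finset ι) (n : ℕ) :
    twoColumnSchur y s (n + 1) n = 0 := by
  rw [twoColumnSchur, mul_comm, sub_self]

lemma twoColumnSchur_empty (y : ι → R) (j n : ℕ) : twoColumnSchur y ∅ j (n + 1) = 0 := by
  cases j <;> simp [twoColumnSchur, esymmOn_empty_succ]

variable [DecidableEq ι] {s : Finset ι} {c : ι}

lemma sum_powersetCard_succ_insert {M : Type*} [AddCommMonoid M] (hc : c ∉ s) (F : Finset ι → M)
    (k : ℕ) :
    ∑ A ∈ (insert c s).powersetCard (k + 1), F A =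
      ∑ A ∈ s.powersetCard (k + 1), F A + ∑ A ∈ s.powersetCard k, F (insert c A) := by
  have notMem {A : Finset ι} {k : ℕ} (hA : A ∈ s.powersetCard k) : c ∉ A :=
    fun hcA => hc ((mem_powersetCard.mp hA).1 hcA)
  rw [powersetCard_succ_insert hc, sum_union, sum_image]
  · intro A hA B hB heq
    rw [← erase_insert (notMem hA), heq, erase_insert (notMem hB)]
  · rw [disjoint_left]
    intro A hA hA'
    obtain ⟨B, -, rfl⟩ := mem_image.mp hA'
    exact notMem hA (mem_insert_self c B)

lemma esymmOn_insert_succ (y : ι → R) (hc : c ∉ s) (k : ℕ) :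
    esymmOn y (insert c s) (k + 1) = esymmOn y s (k + 1) + y c * esymmOn y s k := by
  simp only [esymmOn_eq_sum, sum_powersetCard_succ_insert hc, mul_sum]
  congr 1
  refine sum_congr rfl fun A hA => prod_insert fun hcA => hc ((mem_powersetCard.mp hA).1 hcA)

/-- The sum of `∏_{i ∈ A} u i * ∏_{i ∈ B} v i` over the disjoint `A, B ⊆ s` with `#A = a` and
`#B = b`. -/
def pairSum (u v : ι → R) (s : Finset ι) (a b : ℕ) : R :=
  ∑ A ∈ s.powersetCard a, (∏ i ∈ A, u i) * esymmOn v (s \ A) b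

variable (u v : ι → R)

lemma pairSum_zero (s : Finset ι) (b : ℕ) : pairSum u v s 0 b = esymmOn v s b := by
  simp [pairSum]

lemma pairSum_empty_succ (a b : ℕ) : pairSum u v ∅ (a + 1) b = 0 := by
  rw [pairSum, powersetCard_eq_empty.mpr (by simp), sum_empty]

lemma pairSum_insert_succ_zero (hc : c ∉ s) (a : ℕ) :
    pairSum u v (insert c s) (a + 1) 0 = pairSum u v s (a + 1) 0 + u c * pairSum u v s a 0 := by
  simp only [pairSum, esymmOn_zero, mul_one, ← esymmOn_eq_sum, esymmOn_insert_succ u hc]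

lemma pairSum_insert_succ_succ (hc : c ∉ s) (a b : ℕ) :
    pairSum u v (insert c s) (a + 1) (b + 1) = pairSum u v s (a + 1) (b + 1) +
      v c * pairSum u v s (a + 1) b + u c * pairSum u v s a (b + 1) := by
  simp only [pairSum, sum_powersetCard_succ_insert hc, mul_sum, ← sum_add_distrib]
  congr 1 <;> refine sum_congr rfl fun A hA => ?_
  all_goals have hcA : c ∉ A := fun hcA => hc ((mem_powersetCard.mp hA).1 hcA)
  · rw [insert_sdiff_of_notMem s hcA, esymmOn_insert_succ v (by simp [hc])]
    ring
  · rw [insert_sdiff_insert, sdiff_insert_of_notMem hc, prod_insert hcA]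
    ring

lemma twoColumnSchur_insert_zero (y : ι → R) (hc : c ∉ s) (n : ℕ) :
    twoColumnSchur y (insert c s) 0 (n + 1) =
      twoColumnSchur y s 0 (n + 1) + y c * twoColumnSchur y s 0 n :=
  esymmOn_insert_succ y hc n

lemma twoColumnSchur_insert_succ (y : ι → R) (hc : c ∉ s) (j n : ℕ) :
    twoColumnSchur y (insert c s) (j + 1) (n + 1) =
      (twoColumnSchur y s (j + 1) (n + 1) + y c * twoColumnSchur y s (j + 1) n) +
        y c * (twoColumnSchur y s j (n + 1) + y c * twoColumnSchur y s j n) := by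
  cases j <;> simp only [twoColumnSchur, esymmOn_insert_succ y hc, esymmOn_zero] <;> ring

end Insertion

section MulAddShift

variable {R : Type*} [CommRing R]

/-- The operator `f ↦ P * f n + f (n + 1)` on sequences. -/
def mulAddShift (P : R) : Module.End R (ℕ → R) := P • 1 + LinearMap.funLeft R R Nat.succ

variable (P : R)

lemma mulAddShift_pow_succ_apply (k : ℕ) (f : ℕ → R) (n : ℕ) :
    (mulAddShift P ^ (k + 1)) f n =
      P * (mulAddShift P ^ k) f n + (mulAddShift P ^ k) f (n + 1) := by
  rw [pow_succ']
  rfl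

lemma mulAddShift_pow_comp_succ (k : ℕ) (f : ℕ → R) (n : ℕ) :
    (mulAddShift P ^ k) (fun n => f (n + 1)) n = (mulAddShift P ^ k) f (n + 1) := by
  induction k generalizing n with
  | zero => rfl
  | succ k ih => simp only [mulAddShift_pow_succ_apply, ih]

end MulAddShift

section SignedBinomialSum

variable {R : Type*} [CommRing R]

/-- The sum of `(-1) ^ j * (i + b).choose b * f i j` over `i + j = a`. -/
def signedChooseSum (f : ℕ → ℕ → R) (a b : ℕ) : R :=
  ∑ p ∈ antidiagonal a, (-1) ^ p.2 * (p.1 + b).choose b * f p.1 p.2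

lemma signedChooseSum_zero (f : ℕ → ℕ → R) (b : ℕ) : signedChooseSum f 0 b = f 0 0 := by
  simp [signedChooseSum]

lemma signedChooseSum_eq_zero {f : ℕ → ℕ → R} (hf : ∀ i j, f i j = 0) (a b : ℕ) :
    signedChooseSum f a b = 0 := by
  simp [signedChooseSum, hf]

lemma signedChooseSum_add_mul (f g : ℕ → ℕ → R) (x : R) (a b : ℕ) :
    signedChooseSum (fun i j => f i j + x * g i j) a b =
      signedChooseSum f a b + x * signedChooseSum g a b := by
  simp only [signedChooseSum, mul_sum, ← sum_add_distrib]
  exact sum_congr rfl fun p _ => by ring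

lemma signedChooseSum_succ_zero (f : ℕ → ℕ → R) (a : ℕ) :
    signedChooseSum f (a + 1) 0 =
      signedChooseSum (fun i => f (i + 1)) a 0 + (-1) ^ (a + 1) * f 0 (a + 1) := by
  simp [signedChooseSum, Nat.sum_antidiagonal_succ, add_comm]

lemma signedChooseSum_succ_succ (f : ℕ → ℕ → R) (a b : ℕ) :
    signedChooseSum f (a + 1) (b + 1) =
      signedChooseSum f (a + 1) b + signedChooseSum (fun i => f (i + 1)) a (b + 1) := by
  simp only [signedChooseSum, Nat.sum_antidiagonal_succ, add_assoc, ← sum_add_distrib]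
  congr 1
  · simp
  · refine sum_congr rfl fun p _ => ?_
    have pascal : (p.1 + (1 + (b + 1))).choose (b + 1) =
        (p.1 + (1 + b)).choose b + (p.1 + (b + 1)).choose (b + 1) := by
      rw [show p.1 + (1 + (b + 1)) = p.1 + (b + 1) + 1 by ring, Nat.choose_succ_succ',
        add_comm 1 b]
    rw [pascal]
    push_cast
    ring

lemma signedChooseSum_succ_of_forall_succ {f g : ℕ → ℕ → R} {x : R} (hf0 : ∀ i, f i 0 = g i 0)
    (hf : ∀ i j, f i (j + 1) = g i (j + 1) + x * g i j) (a b : ℕ) :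
    signedChooseSum f (a + 1) b = signedChooseSum g (a + 1) b - x * signedChooseSum g a b := by
  simp only [signedChooseSum, Nat.sum_antidiagonal_succ', hf0, hf, mul_sum]
  rw [add_sub_assoc, ← sum_sub_distrib]
  congr 1
  exact sum_congr rfl fun p _ => by ring

end SignedBinomialSum

section PairSum

variable {R ι : Type*} [CommRing R] (P : R) (y : ι → R)

/-- The summands `(P + E) ^ i S_{n, j}` of the expansion of `pairSum`, where `S_{n, j}` is the
two-column Schur polynomial and `E` is the shift `n ↦ n + 1`. -/
def shiftedSchur (s : Finset ι) (n i j : ℕ) : R :=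
  (mulAddShift P ^ i) (twoColumnSchur y s j) n

lemma shiftedSchur_exponent_succ (s : Finset ι) (n i j : ℕ) :
    shiftedSchur P y s n (i + 1) j =
      shiftedSchur P y s (n + 1) i j + P * shiftedSchur P y s n i j := by
  rw [shiftedSchur, mulAddShift_pow_succ_apply, add_comm]
  rfl

lemma shiftedSchur_empty (n i j : ℕ) : shiftedSchur P y ∅ (n + 1) i j = 0 := by
  have hzero : (fun n => twoColumnSchur y ∅ j (n + 1)) = 0 := funext (twoColumnSchur_empty y j)
  rw [shiftedSchur, ← mulAddShift_pow_comp_succ, hzero, map_zero, Pi.zero_apply]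

variable [DecidableEq ι] {s : Finset ι} {c : ι}

lemma shiftedSchur_insert_zero (hc : c ∉ s) (n i : ℕ) :
    shiftedSchur P y (insert c s) (n + 1) i 0 =
      shiftedSchur P y s (n + 1) i 0 + y c * shiftedSchur P y s n i 0 := by
  have hsum : (fun n => twoColumnSchur y (insert c s) 0 (n + 1)) =
      (fun n => twoColumnSchur y s 0 (n + 1)) + y c • twoColumnSchur y s 0 :=
    funext (twoColumnSchur_insert_zero y hc)
  simp only [shiftedSchur, ← mulAddShift_pow_comp_succ, hsum, map_add, map_smul, Pi.add_apply,
    Pi.smul_apply, smul_eq_mul]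

lemma shiftedSchur_insert_succ (hc : c ∉ s) (n i j : ℕ) :
    shiftedSchur P y (insert c s) (n + 1) i (j + 1) =
      (shiftedSchur P y s (n + 1) i (j + 1) + y c * shiftedSchur P y s n i (j + 1)) +
        y c * (shiftedSchur P y s (n + 1) i j + y c * shiftedSchur P y s n i j) := by
  have hsum : (fun n => twoColumnSchur y (insert c s) (j + 1) (n + 1)) =
      ((fun n => twoColumnSchur y s (j + 1) (n + 1)) + y c • twoColumnSchur y s (j + 1)) +
        y c • ((fun n => twoColumnSchur y s j (n + 1)) + y c • twoColumnSchur y s j) :=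
    funext (twoColumnSchur_insert_succ y hc j)
  simp only [shiftedSchur, ← mulAddShift_pow_comp_succ, hsum, map_add, map_smul, Pi.add_apply,
    Pi.smul_apply, smul_eq_mul]

lemma signedChooseSum_shiftedSchur_insert (hc : c ∉ s) (n a b : ℕ) :
    signedChooseSum (shiftedSchur P y (insert c s) (n + 1)) (a + 1) b =
      signedChooseSum (shiftedSchur P y s (n + 1)) (a + 1) b +
        y c * signedChooseSum (shiftedSchur P y s n) (a + 1) b -
        y c * (signedChooseSum (shiftedSchur P y s (n + 1)) a b +
          y c * signedChooseSum (shiftedSchur P y s n) a b) := by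
  rw [signedChooseSum_succ_of_forall_succ
    (g := fun i j => shiftedSchur P y s (n + 1) i j + y c * shiftedSchur P y s n i j)
    (shiftedSchur_insert_zero P y hc n) (shiftedSchur_insert_succ P y hc n),
    signedChooseSum_add_mul, signedChooseSum_add_mul]

theorem pairSum_eq_signedChooseSum (s : Finset ι) (a b : ℕ) :
    pairSum (fun i => P * y i - y i ^ 2) y s a b =
      signedChooseSum (shiftedSchur P y s (a + b)) a b := by
  induction s using Finset.induction_on generalizing a b with
  | empty =>
    cases a with
    | zero => rw [pairSum_zero, signedChooseSum_zero, zero_add]; rfl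
    | succ a =>
      rw [pairSum_empty_succ, Nat.succ_add, signedChooseSum_eq_zero (shiftedSchur_empty P y _)]
  | insert c s hc ih =>
    cases a with
    | zero => rw [pairSum_zero, signedChooseSum_zero, zero_add]; rfl
    | succ a =>
      rw [Nat.succ_add, signedChooseSum_shiftedSchur_insert P y hc]
      have shift := signedChooseSum_add_mul (shiftedSchur P y s (a + b + 1))
        (shiftedSchur P y s (a + b)) P a b
      simp only [← shiftedSchur_exponent_succ] at shift
      cases b with
      | zero =>
        have last : shiftedSchur P y s a 0 (a + 1) = 0 := twoColumnSchur_succ_self y s a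
        rw [pairSum_insert_succ_zero _ _ hc, ih, ih, Nat.succ_add,
          signedChooseSum_succ_zero (shiftedSchur P y s (a + 0)), shift, add_zero, last]
        ring
      | succ b =>
        rw [pairSum_insert_succ_succ _ _ hc, ih, ih, ih,
          signedChooseSum_succ_succ (shiftedSchur P y s (a + (b + 1))), shift, Nat.succ_add a b,
          Nat.succ_add a (b + 1)]
        simp only [Nat.succ_eq_add_one, add_assoc]
        ring

end PairSum

section ConeMembership

lemma signedChooseSum_mem {R : Type*} [CommRing R] (C : AddSubmonoid R) (b : ℕ) :
    ∀ (a : ℕ) (f : ℕ → ℕ → R), (∀ i j, i + j = a → f i j ∈ C) →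
      (∀ i j, i + j + 1 = a → f (i + 1) j - f i (j + 1) ∈ C) → signedChooseSum f a b ∈ C
  | 0, f, hf, _ => by
    rw [signedChooseSum_zero]
    exact hf 0 0 rfl
  | 1, f, hf, hdiff => by
    have hsplit : signedChooseSum f 1 b = (f 1 0 - f 0 1) + b • f 1 0 := by
      simp only [signedChooseSum, Nat.sum_antidiagonal_succ', HasAntidiagonal.antidiagonal_zero,
        sum_singleton, zero_add, add_comm 1 b, Nat.choose_self, Nat.choose_succ_self_right,
        Nat.cast_add, Nat.cast_one, nsmul_eq_mul]
      ring
    rw [hsplit]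
    exact add_mem (hdiff 0 0 rfl) (nsmul_mem (hf 1 0 rfl) b)
  | a + 2, f, hf, hdiff => by
    obtain ⟨d, hd⟩ := Nat.exists_eq_add_of_le
      (Nat.choose_le_choose b (show a + 1 + b ≤ a + 2 + b by omega))
    have hsplit : signedChooseSum f (a + 2) b =
        ((a + 1 + b).choose b • (f (a + 2) 0 - f (a + 1) 1) + d • f (a + 2) 0) +
          signedChooseSum (fun i j => f i (j + 2)) a b := by
      simp only [signedChooseSum, Nat.sum_antidiagonal_succ', hd, Nat.cast_add, pow_succ, mul_neg,
        mul_one, neg_mul, neg_neg, zero_add, nsmul_eq_mul]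
      ring
    rw [hsplit]
    refine add_mem (add_mem (nsmul_mem (hdiff (a + 1) 0 rfl) _) (nsmul_mem (hf (a + 2) 0 rfl) _)) ?_
    exact signedChooseSum_mem C b a _ (fun i j hij => hf i (j + 2) (by omega))
      fun i j hij => hdiff i (j + 2) (by omega)

variable {R : Type*} [CommRing R]

lemma mulAddShift_pow_congr (P : R) (k : ℕ) {f g : ℕ → R} {n : ℕ}
    (hfg : ∀ n', n ≤ n' → n' ≤ n + k → f n' = g n') :
    (mulAddShift P ^ k) f n = (mulAddShift P ^ k) g n := by
  induction k generalizing n with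
  | zero => exact hfg n le_rfl le_rfl
  | succ k ih =>
    rw [mulAddShift_pow_succ_apply, mulAddShift_pow_succ_apply,
      ih fun n' h h' => hfg n' h (by omega), ih fun n' h h' => hfg n' (by omega) (by omega)]

variable {r : ℕ} (y : Fin r → R)

lemma mulAddShift_pow_mem_cone (k : ℕ) {f : ℕ → R} (hf : ∀ n, f n ∈ alternantCone y) (n : ℕ) :
    (mulAddShift (∑ i, y i) ^ k) f n ∈ alternantCone y := by
  induction k generalizing n with
  | zero => exact hf n
  | succ k ih =>
    rw [mulAddShift_pow_succ_apply]
    exact add_mem (sum_mul_mem_cone (ih n)) (ih (n + 1))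

lemma twoColumnSchur_mul_alternant_rev {a c : ℕ} (hca : c ≤ a) (hr : a + c ≤ r) :
    twoColumnSchur y univ c a * alternant y (fun i => i.rev) =
      alternant y (twoColumnExponent r a c) := by
  have esymm_mul (a : ℕ) (ha : a ≤ r) : esymmOn y univ a * alternant y (fun i => i.rev) =
      alternant y (twoColumnExponent r a 0) := by
    rw [← twoColumnExponent_zero_zero,
      esymmOn_mul_alternant_twoColumnExponent y (a := 0) (by omega)]
    simp
  cases c with
  | zero => exact esymm_mul a hr
  | succ c =>
    rw [twoColumnSchur, sub_mul, mul_right_comm, esymm_mul a (by omega), mul_right_comm,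
      esymm_mul (a + 1) (by omega), mul_comm, mul_comm _ (esymmOn y univ c),
      esymmOn_mul_alternant_twoColumnExponent y hr,
      esymmOn_mul_alternant_twoColumnExponent y (by omega), min_eq_right hca,
      min_eq_right (by omega), sum_range_succ]
    simp [add_assoc, add_comm 1 c]

lemma sum_mul_alternant_twoColumnExponent_sub_mem_cone (a : ℕ) {j : ℕ} (hj : j < r) :
    (∑ i, y i) * alternant y (twoColumnExponent r a j) -
      alternant y (twoColumnExponent r a (j + 1)) ∈ alternantCone y := by
  have hnext := twoColumnExponent_add_indicator_singleton a (⟨j, hj⟩ : Fin r)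
  rw [sum_mul_alternant, ← add_sum_erase univ _ (mem_univ ⟨j, hj⟩), hnext, add_sub_cancel_left]
  exact sum_mem fun i _ => alternant_add_indicator_mem_cone (twoColumnExponent_strictAnti r a j) _

lemma shiftedAlternant_sub_mem_cone (k n : ℕ) {j : ℕ} (hj : j < r) :
    (mulAddShift (∑ i, y i) ^ (k + 1)) (fun n => alternant y (twoColumnExponent r n j)) n -
        (mulAddShift (∑ i, y i) ^ k) (fun n => alternant y (twoColumnExponent r n (j + 1))) n ∈
      alternantCone y := by
  set P := ∑ i, y i
  set f := fun n => alternant y (twoColumnExponent r n j)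
  set g := fun n => alternant y (twoColumnExponent r n (j + 1))
  have hsplit : (mulAddShift P ^ (k + 1)) f n - (mulAddShift P ^ k) g n =
      (mulAddShift P ^ k) (P • f - g) n + (mulAddShift P ^ k) f (n + 1) := by
    rw [mulAddShift_pow_succ_apply, map_sub, map_smul, Pi.sub_apply, Pi.smul_apply, smul_eq_mul]
    ring
  rw [hsplit]
  exact add_mem
    (mulAddShift_pow_mem_cone y k (sum_mul_alternant_twoColumnExponent_sub_mem_cone y · hj) n)
    (mulAddShift_pow_mem_cone y k
      (fun n => alternant_mem_cone (twoColumnExponent_strictAnti r n j)) (n + 1))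

lemma shiftedSchur_mul_alternant_rev {k n j : ℕ} (hjn : j ≤ n) (hr : n + k + j ≤ r) (P : R) :
    shiftedSchur P y univ n k j * alternant y (fun i => i.rev) =
      (mulAddShift P ^ k) (fun n => alternant y (twoColumnExponent r n j)) n := by
  rw [shiftedSchur, mul_comm, ← smul_eq_mul, ← Pi.smul_apply, ← map_smul]
  refine mulAddShift_pow_congr P k fun n' hn hn' => ?_
  rw [Pi.smul_apply, smul_eq_mul, mul_comm,
    twoColumnSchur_mul_alternant_rev y (hjn.trans hn) (by omega)]

theorem pairSum_mul_alternant_rev_mem_cone {a b : ℕ} (hr : a + b + a ≤ r) :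
    pairSum (fun i => (∑ k, y k) * y i - y i ^ 2) y univ a b * alternant y (fun i => i.rev) ∈
      alternantCone y := by
  have hexpand : pairSum (fun i => (∑ k, y k) * y i - y i ^ 2) y univ a b *
      alternant y (fun i => i.rev) = signedChooseSum (fun k j =>
        (mulAddShift (∑ i, y i) ^ k) (fun n => alternant y (twoColumnExponent r n j)) (a + b))
        a b := by
    rw [pairSum_eq_signedChooseSum, signedChooseSum, sum_mul]
    refine sum_congr rfl fun p hp => ?_
    rw [HasAntidiagonal.mem_antidiagonal] at hp
    rw [mul_assoc, shiftedSchur_mul_alternant_rev y (by omega) (by omega)]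
  rw [hexpand]
  exact signedChooseSum_mem _ b a _
    (fun k j _ => mulAddShift_pow_mem_cone y k
      (fun n => alternant_mem_cone (twoColumnExponent_strictAnti r n j)) _)
    fun k j hkj => shiftedAlternant_sub_mem_cone y k _ (by omega)

end ConeMembership

/-! ### Tableaux and the bialternant formula -/

section Branching

variable {R : Type*} [CommRing R] {r : ℕ}

lemma det_eq_of_forall_col_eq_add_smul_succ {A B : Matrix (Fin (r + 1)) (Fin (r + 1)) R}
    (c : Fin r → R) (hlast : ∀ i, A i (Fin.last r) = B i (Fin.last r))
    (hcastSucc : ∀ i (j : Fin r), A i j.castSucc = B i j.castSucc + c j * A i j.succ) :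
    A.det = B.det := by
  rw [← Matrix.det_submatrix_equiv_self Fin.revPerm A,
    ← Matrix.det_submatrix_equiv_self Fin.revPerm B]
  refine Matrix.det_eq_of_forall_col_eq_smul_add_pred (fun j => c j.rev)
    (fun i => by simp [hlast]) fun i j => ?_
  simp only [Matrix.submatrix_apply, Fin.revPerm_apply, Fin.rev_succ, Fin.rev_castSucc]
  exact hcastSucc _ _

lemma det_eq_mul_det_submatrix_of_last_row {A : Matrix (Fin (r + 1)) (Fin (r + 1)) R}
    (h : ∀ j : Fin r, A (Fin.last r) j.castSucc = 0) :
    A.det = A (Fin.last r) (Fin.last r) * (A.submatrix Fin.castSucc Fin.castSucc).det := by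
  rw [Matrix.det_succ_row A (Fin.last r), Fin.sum_univ_castSucc]
  simp [h, Fin.succAbove_last]

lemma det_sum_mul_pow (y : Fin r → R) (I : Fin r → Finset ℕ) (w : Fin r → ℕ → R)
    (e : Fin r → ℕ → ℕ) :
    (Matrix.of fun i j => ∑ p ∈ I j, w j p * y i ^ e j p).det =
      ∑ κ ∈ Fintype.piFinset I, (∏ j, w j (κ j)) * alternant y fun j => e j (κ j) := by
  simp only [alternant, Matrix.det_apply', Matrix.of_apply, prod_univ_sum, mul_sum]
  rw [sum_comm]
  refine sum_congr rfl fun κ _ => sum_congr rfl fun σ _ => ?_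
  rw [prod_mul_distrib, mul_left_comm]

lemma sub_mul_sum_Icc_pow_mul_pow (x z : R) {a b : ℕ} (hab : a ≤ b) (k : ℕ) :
    (z - x) * ∑ p ∈ Icc a b, x ^ (b - p) * z ^ (p + k) =
      z ^ (b + k + 1) - x ^ (b - a + 1) * z ^ (a + k) := by
  have hfactor : ∑ p ∈ Icc a b, x ^ (b - p) * z ^ (p + k) =
      (∑ p ∈ Ico a (b + 1), z ^ p * x ^ (b + 1 - 1 - p)) * z ^ k := by
    rw [sum_mul, Ico_add_one_right_eq_Icc]
    exact sum_congr rfl fun p _ => by rw [Nat.add_sub_cancel]; ring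
  rw [hfactor, ← mul_assoc, (Commute.all z x).mul_geom_sum₂_Ico (by lia),
    show b + 1 - a = b - a + 1 by lia]
  ring

theorem alternant_add_rev_eq_sum_interlacing (y : Fin (r + 1) → R) {ν : Fin (r + 1) → ℕ}
    (hν : Antitone ν) :
    alternant y (fun j => ν j + j.rev) =
      y (Fin.last r) ^ ν (Fin.last r) * (∏ i : Fin r, (y i.castSucc - y (Fin.last r))) *
        ∑ κ ∈ Fintype.piFinset fun j : Fin r => Icc (ν j.succ) (ν j.castSucc),
          (∏ j, y (Fin.last r) ^ (ν j.castSucc - κ j)) *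
            alternant (fun i => y i.castSucc) fun j => κ j + j.rev := by
  -- Subtracting from each column a multiple of the next one makes the row `i` of every column but
  -- the last divisible by `y i - y (last r)`, so the last row vanishes outside the last column.
  set x := y (Fin.last r)
  let C : Matrix (Fin r) (Fin r) R := Matrix.of fun i j =>
    ∑ p ∈ Icc (ν j.succ) (ν j.castSucc), x ^ (ν j.castSucc - p) * y i.castSucc ^ (p + j.rev)
  let B : Matrix (Fin (r + 1)) (Fin (r + 1)) R := Matrix.of fun i =>
    Fin.snoc (α := fun _ => R)
      (fun j : Fin r => (y i - x) *
        ∑ p ∈ Icc (ν j.succ) (ν j.castSucc), x ^ (ν j.castSucc - p) * y i ^ (p + j.rev))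
      (y i ^ ν (Fin.last r))
  have hreduce : alternant y (fun j => ν j + j.rev) = B.det := by
    refine det_eq_of_forall_col_eq_add_smul_succ
      (fun j => x ^ (ν j.castSucc - ν j.succ + 1)) (fun i => by simp [B]) fun i j => ?_
    simp only [B, Matrix.of_apply, Fin.snoc_castSucc, Fin.rev_castSucc, Fin.rev_succ,
      Fin.val_succ, Fin.val_castSucc]
    rw [sub_mul_sum_Icc_pow_mul_pow x (y i) (hν (Fin.castSucc_le_succ j)), sub_add_cancel,
      add_assoc]
  have hminor : B.submatrix Fin.castSucc Fin.castSucc =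
      Matrix.of fun i j => (y i.castSucc - x) * C i j := by
    ext i j
    simp [B, C]
  rw [hreduce, det_eq_mul_det_submatrix_of_last_row fun j => by simp [B, x], hminor,
    Matrix.det_mul_column, ← mul_assoc]
  congr 1
  · simp [B, x]
  · exact det_sum_mul_pow _ _ _ _

end Branching

section Tableaux

/-- The functions supported on `s` whose value at each `i ∈ s` lies in `t i`. -/
noncomputable def supportedFunctions {ι : Type*} (s : Finset ι) (t : ι → Finset ℕ) :
    Finset (ι → ℕ) :=
  (s.finsupp t).image (⇑)

lemma mem_supportedFunctions {ι : Type*} {s : Finset ι} {t : ι → Finset ℕ} {f : ι → ℕ} :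
    f ∈ supportedFunctions s t ↔ (∀ i ∉ s, f i = 0) ∧ ∀ i ∈ s, f i ∈ t i := by
  simp only [supportedFunctions, mem_image, mem_finsupp_iff]
  refine ⟨?_, fun ⟨hzero, hmem⟩ => ?_⟩
  · rintro ⟨g, ⟨hg, hmem⟩, rfl⟩
    exact ⟨fun i hi => Finsupp.notMem_support_iff.mp fun h => hi (hg h), hmem⟩
  · exact ⟨Finsupp.onFinset s f fun i hi => by_contra fun h => hi (hzero i h),
      ⟨Finsupp.support_onFinset_subset, hmem⟩, rfl⟩

lemma sum_supportedFunctions_range {M : Type*} [AddCommMonoid M] (r : ℕ) (I : ℕ → Finset ℕ)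
    (F : (Fin r → ℕ) → M) :
    ∑ κ ∈ supportedFunctions (range r) I, F (fun j => κ j) =
      ∑ κ ∈ Fintype.piFinset fun j : Fin r => I j, F κ := by
  have hextend (κ : Fin r → ℕ) (j : Fin r) : Function.extend Fin.val κ 0 (j : ℕ) = κ j :=
    Fin.val_injective.extend_apply κ 0 j
  refine sum_nbij' (fun κ j => κ j) (fun κ => Function.extend Fin.val κ 0) ?_ ?_ ?_ ?_ ?_
  · exact fun κ hκ => Fintype.mem_piFinset.mpr fun j =>
      (mem_supportedFunctions.mp hκ).2 j (mem_range.mpr j.2)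
  · refine fun κ hκ => mem_supportedFunctions.mpr ⟨fun i hi => ?_, fun i hi => ?_⟩
    · refine Function.extend_apply' _ _ _ fun ⟨j, hj⟩ => hi ?_
      exact hj ▸ mem_range.mpr j.2
    · exact (hextend κ ⟨i, mem_range.mp hi⟩).symm ▸ Fintype.mem_piFinset.mp hκ _
  · refine fun κ hκ => funext fun i => ?_
    by_cases hi : i < r
    · exact hextend _ ⟨i, hi⟩
    · rw [Function.extend_apply' _ _ _ fun ⟨j, hj⟩ => hi (hj ▸ j.2),
        (mem_supportedFunctions.mp hκ).1 i (by simpa using hi), Pi.zero_apply]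
  · exact fun κ _ => funext (hextend κ)
  · exact fun _ _ => rfl

/-- `t` is a semistandard tableau with row lengths `ν`, extended by `0` outside its shape. For
`ν = rowLen lam` this is `IsSSYT lam t`. -/
structure IsTableau (ν : ℕ → ℕ) (t : Cell → ℕ) : Prop where
  eq_zero : ∀ c : Cell, ¬ c.2 < ν c.1 → t c = 0
  pos : ∀ c : Cell, c.2 < ν c.1 → 0 < t c
  row_le : ∀ i j, j + 1 < ν i → t (i, j) ≤ t (i, j + 1)
  col_lt : ∀ i j, j < ν (i + 1) → t (i, j) < t (i + 1, j)

/-- The cells in the first `r` rows of the shape with row lengths `ν`. -/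
def youngCells (r : ℕ) (ν : ℕ → ℕ) : Finset Cell :=
  ((range r).sigma fun i => range (ν i)).map (Equiv.sigmaEquivProd ℕ ℕ).toEmbedding

lemma mem_youngCells {r : ℕ} {ν : ℕ → ℕ} {c : Cell} :
    c ∈ youngCells r ν ↔ c.1 < r ∧ c.2 < ν c.1 := by
  obtain ⟨i, j⟩ := c
  simp [youngCells]

lemma prod_youngCells {M : Type*} [CommMonoid M] (r : ℕ) (ν : ℕ → ℕ) (f : Cell → M) :
    ∏ c ∈ youngCells r ν, f c = ∏ i ∈ range r, ∏ j ∈ range (ν i), f (i, j) := by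
  simp [youngCells, prod_sigma]

/-- The semistandard tableaux with row lengths `ν` and entries at most `r`, where `ν` is meant to
vanish from `r` on. -/
noncomputable def tableaux (r : ℕ) (ν : ℕ → ℕ) : Finset (Cell → ℕ) :=
  {t ∈ supportedFunctions (youngCells r ν) fun _ => Icc 1 r | IsTableau ν t}

/-- The row lengths `κ` with at most `r` rows that interlace with `ν`, i.e.
`ν 0 ≥ κ 0 ≥ ν 1 ≥ κ 1 ≥ ⋯`. -/
noncomputable def interlacing (r : ℕ) (ν : ℕ → ℕ) : Finset (ℕ → ℕ) :=
  supportedFunctions (range r) fun i => Icc (ν (i + 1)) (ν i)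

variable {r : ℕ} {ν κ : ℕ → ℕ} {t : Cell → ℕ}

lemma mem_tableaux (h0 : ∀ i, r ≤ i → ν i = 0) :
    t ∈ tableaux r ν ↔ IsTableau ν t ∧ ∀ c, t c ≤ r := by
  have hcells (c : Cell) : c ∈ youngCells r ν ↔ c.2 < ν c.1 := by
    rw [mem_youngCells, and_iff_right_of_imp]
    exact fun hc => by_contra fun h => by simp [h0 c.1 (by lia)] at hc
  simp only [tableaux, mem_filter, mem_supportedFunctions, hcells, mem_Icc]
  refine ⟨fun ⟨⟨_, hmem⟩, ht⟩ => ⟨ht, fun c => ?_⟩,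
    fun ⟨ht, hr⟩ => ⟨⟨ht.eq_zero, fun c hc => ⟨ht.pos c hc, hr c⟩⟩, ht⟩⟩
  by_cases hc : c.2 < ν c.1
  · exact (hmem c hc).2
  · simp [ht.eq_zero c hc]

lemma mem_interlacing (h0 : ∀ i, r + 1 ≤ i → ν i = 0) :
    κ ∈ interlacing r ν ↔ (∀ i, r ≤ i → κ i = 0) ∧ ∀ i, ν (i + 1) ≤ κ i ∧ κ i ≤ ν i := by
  simp only [interlacing, mem_supportedFunctions, mem_range, not_lt, mem_Icc]
  refine and_congr_right fun hκ => ⟨fun h i => ?_, fun h i _ => h i⟩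
  by_cases hi : i < r
  · exact h i hi
  · simp [hκ i (by lia), h0 (i + 1) (by lia)]

lemma antitone_of_interlaces (h : ∀ i, ν (i + 1) ≤ κ i ∧ κ i ≤ ν i) : Antitone κ :=
  antitone_nat_of_succ_le fun i => (h (i + 1)).2.trans (h i).1

/-- The length of the `i`-th row of the part of `t` with entries at most `r`. -/
def subshape (r : ℕ) (ν : ℕ → ℕ) (t : Cell → ℕ) (i : ℕ) : ℕ := #{j ∈ range (ν i) | t (i, j) ≤ r}

/-- The restriction of a filling to the shape `κ`. -/
def restrictTo (κ : ℕ → ℕ) (t : Cell → ℕ) (c : Cell) : ℕ := if c.2 < κ c.1 then t c else 0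

/-- The extension of a filling of the shape `κ` to the shape `ν` by the new entry `r + 1`. -/
def growTo (r : ℕ) (ν κ : ℕ → ℕ) (t : Cell → ℕ) (c : Cell) : ℕ :=
  if c.2 < κ c.1 then t c else if c.2 < ν c.1 then r + 1 else 0

namespace IsTableau

lemma lt_apply (ht : IsTableau ν t) (hν : Antitone ν) (i : ℕ) {j : ℕ} (hj : j < ν i) :
    i < t (i, j) := by
  induction i with
  | zero => exact ht.pos (0, j) hj
  | succ i ih =>
    have hprev := ih (hj.trans_le (hν i.le_succ))
    have hcol := ht.col_lt i j hj
    lia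

lemma lt_subshape_iff (ht : IsTableau ν t) {i j : ℕ} :
    j < subshape r ν t i ↔ j < ν i ∧ t (i, j) ≤ r := by
  have hinitial := eq_Ico_of_forall_succ_mem (s := {j ∈ range (ν i) | t (i, j) ≤ r})
    (fun k _ => k.zero_le) fun k _ hk => by
      simp only [mem_filter, mem_range] at hk ⊢
      exact ⟨by lia, (ht.row_le i k hk.1).trans hk.2⟩
  rw [zero_add, ← range_eq_Ico] at hinitial
  rw [subshape, ← mem_range, ← hinitial, mem_filter, mem_range]

lemma subshape_mem_interlacing (ht : IsTableau ν t) (hν : Antitone ν)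
    (h0 : ∀ i, r + 1 ≤ i → ν i = 0) (hr : ∀ c, t c ≤ r + 1) :
    subshape r ν t ∈ interlacing r ν := by
  refine (mem_interlacing h0).mpr ⟨fun i hi => ?_, fun i => ⟨?_, ?_⟩⟩
  · by_contra h
    have hfirst := ht.lt_subshape_iff.mp (Nat.pos_of_ne_zero h)
    exact absurd (ht.lt_apply hν i hfirst.1) (by lia)
  · by_contra! h
    refine lt_irrefl _ (ht.lt_subshape_iff.mpr ⟨h.trans_le (hν i.le_succ), ?_⟩)
    have hcol := ht.col_lt i _ h
    have hle := hr (i + 1, subshape r ν t i)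
    lia
  · exact (card_filter_le _ _).trans (card_range _).le

end IsTableau

lemma isTableau_restrictTo (ht : IsTableau ν t) (hκ : ∀ i, ν (i + 1) ≤ κ i ∧ κ i ≤ ν i) :
    IsTableau κ (restrictTo κ t) where
  eq_zero c hc := if_neg hc
  pos c hc := by
    rw [restrictTo, if_pos hc]
    exact ht.pos c (hc.trans_le (hκ _).2)
  row_le i j hj := by
    rw [restrictTo, restrictTo, if_pos hj, if_pos (by lia)]
    exact ht.row_le i j (hj.trans_le (hκ i).2)
  col_lt i j hj := by
    have hj' : j < ν (i + 1) := hj.trans_le (hκ _).2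
    rw [restrictTo, restrictTo, if_pos hj, if_pos (hj'.trans_le (hκ i).1)]
    exact ht.col_lt i j hj'

lemma isTableau_growTo (ht : IsTableau κ t) (hr : ∀ c, t c ≤ r)
    (hκ : ∀ i, ν (i + 1) ≤ κ i ∧ κ i ≤ ν i) : IsTableau ν (growTo r ν κ t) where
  eq_zero c hc := by
    rw [growTo, if_neg fun h => hc (h.trans_le (hκ _).2), if_neg hc]
  pos c hc := by
    have hpos := ht.pos c
    grind [growTo]
  row_le i j hj := by
    have hle := hr (i, j)
    have hrow := ht.row_le i j
    grind [growTo]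
  col_lt i j hj := by
    have hle := hr (i, j)
    have hcol := ht.col_lt i j
    have hinterlace := hκ i
    grind [growTo]

lemma subshape_growTo (hr : ∀ c, t c ≤ r) (hκ : ∀ i, κ i ≤ ν i) :
    subshape r ν (growTo r ν κ t) = κ := by
  funext i
  have hfilter : {j ∈ range (ν i) | growTo r ν κ t (i, j) ≤ r} = range (κ i) := by
    ext j
    have hle := hr (i, j)
    have hrow := hκ i
    grind [growTo]
  rw [subshape, hfilter, card_range]

lemma restrictTo_growTo (ht : IsTableau κ t) : restrictTo κ (growTo r ν κ t) = t := by
  funext c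
  have hzero := ht.eq_zero c
  grind [restrictTo, growTo]

lemma growTo_restrictTo_subshape (ht : IsTableau ν t) (hr : ∀ c, t c ≤ r + 1) :
    growTo r ν (subshape r ν t) (restrictTo (subshape r ν t) t) = t := by
  funext c
  have hzero := ht.eq_zero c
  have hle := hr c
  have hsub := ht.lt_subshape_iff (r := r) (i := c.1) (j := c.2)
  grind [restrictTo, growTo]

/-- The Schur polynomial of the shape with row lengths `ν` in the variables `x 1, …, x r`. -/
noncomputable def schurPoly {R : Type*} [CommRing R] (x : ℕ → R) (r : ℕ) (ν : ℕ → ℕ) : R :=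
  ∑ t ∈ tableaux r ν, ∏ c ∈ youngCells r ν, x (t c)

lemma prod_growTo {R : Type*} [CommRing R] (x : ℕ → R) (hlast : κ r = 0) (hκ : ∀ i, κ i ≤ ν i)
    (t : Cell → ℕ) :
    ∏ c ∈ youngCells (r + 1) ν, x (growTo r ν κ t c) =
      x (r + 1) ^ ν r * (∏ j : Fin r, x (r + 1) ^ (ν j - κ j)) *
        ∏ c ∈ youngCells r κ, x (t c) := by
  have hrow (i : ℕ) : ∏ j ∈ range (ν i), x (growTo r ν κ t (i, j)) =
      x (r + 1) ^ (ν i - κ i) * ∏ j ∈ range (κ i), x (t (i, j)) := by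
    rw [← prod_range_mul_prod_Ico _ (hκ i), mul_comm]
    congr 1
    · rw [prod_congr rfl (g := fun _ => x (r + 1)) fun j hj => ?_, prod_const, Nat.card_Ico]
      rw [mem_Ico] at hj
      rw [growTo, if_neg (by simpa using hj.1), if_pos hj.2]
    · exact prod_congr rfl fun j hj => by rw [growTo, if_pos (mem_range.mp hj)]
  simp only [prod_youngCells, prod_range_succ _ r, hrow, prod_mul_distrib, hlast,
    prod_range fun i => x (r + 1) ^ (ν i - κ i), Nat.sub_zero, range_zero, prod_empty, mul_one]
  ring

lemma schurPoly_succ {R : Type*} [CommRing R] (x : ℕ → R) (hν : Antitone ν)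
    (h0 : ∀ i, r + 1 ≤ i → ν i = 0) :
    schurPoly x (r + 1) ν = ∑ κ ∈ interlacing r ν,
      x (r + 1) ^ ν r * (∏ j : Fin r, x (r + 1) ^ (ν j - κ j)) * schurPoly x r κ := by
  have hmaps : ∀ t ∈ tableaux (r + 1) ν, subshape r ν t ∈ interlacing r ν := fun t ht =>
    have ⟨ht, hr⟩ := (mem_tableaux h0).mp ht
    ht.subshape_mem_interlacing hν h0 hr
  rw [schurPoly, ← sum_fiberwise_of_maps_to hmaps]
  refine sum_congr rfl fun κ hκ => ?_
  obtain ⟨hκ0, hκ⟩ := (mem_interlacing h0).mp hκ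
  rw [schurPoly, mul_sum]
  simp only [← prod_growTo x (hκ0 r le_rfl) fun i => (hκ i).2]
  refine sum_nbij' (restrictTo κ) (growTo r ν κ) ?_ ?_ ?_ ?_ ?_ <;>
    simp only [mem_filter, mem_tableaux h0, mem_tableaux hκ0]
  · rintro t ⟨⟨ht, hr⟩, rfl⟩
    refine ⟨isTableau_restrictTo ht hκ, fun c => ?_⟩
    have hsub := ht.lt_subshape_iff (r := r) (i := c.1) (j := c.2)
    grind [restrictTo]
  · rintro t ⟨ht, hr⟩
    refine ⟨⟨isTableau_growTo ht hr hκ, fun c => ?_⟩, subshape_growTo hr fun i => (hκ i).2⟩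
    have hle := hr c
    grind [growTo]
  · rintro t ⟨⟨ht, hr⟩, rfl⟩
    exact growTo_restrictTo_subshape ht hr
  · exact fun t ht => restrictTo_growTo ht.1
  · rintro t ⟨⟨ht, hr⟩, rfl⟩
    rw [growTo_restrictTo_subshape ht hr]

lemma schurPoly_zero {R : Type*} [CommRing R] (x : ℕ → R) (h0 : ∀ i, ν i = 0) :
    schurPoly x 0 ν = 1 := by
  have htableaux : tableaux 0 ν = {0} := by
    ext t
    rw [mem_tableaux fun i _ => h0 i, mem_singleton]
    refine ⟨fun ht => funext fun c => Nat.le_zero.mp (ht.2 c), ?_⟩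
    rintro rfl
    exact ⟨⟨by simp, by simp [h0], by simp, by simp [h0]⟩, by simp⟩
  simp [schurPoly, htableaux, youngCells]

theorem alternant_add_rev_eq_alternant_rev_mul_schurPoly {R : Type*} [CommRing R] (x : ℕ → R)
    (hν : Antitone ν) (h0 : ∀ i, r ≤ i → ν i = 0) :
    alternant (fun i : Fin r => x (i + 1)) (fun j => ν j + j.rev) =
      alternant (fun i : Fin r => x (i + 1)) (fun j => j.rev) * schurPoly x r ν := by
  induction r generalizing ν with
  | zero => simp [alternant, schurPoly_zero x fun i => h0 i i.zero_le]
  | succ r ih =>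
    have hrev := alternant_add_rev_eq_sum_interlacing (fun i : Fin (r + 1) => x (i + 1))
      (ν := 0) antitone_const
    simp only [Pi.zero_apply, zero_add, pow_zero, one_mul, Icc_self, Fintype.piFinset_singleton,
      sum_singleton, zero_tsub, prod_const_one, Fin.val_castSucc, Fin.val_last] at hrev
    rw [alternant_add_rev_eq_sum_interlacing _ fun i j h => hν h, hrev, schurPoly_succ x hν h0]
    simp only [Fin.val_castSucc, Fin.val_last, Fin.val_succ]
    rw [← sum_supportedFunctions_range r (fun i => Icc (ν (i + 1)) (ν i)) fun κ =>
      (∏ j : Fin r, x (r + 1) ^ (ν j - κ j)) *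
        alternant (fun i : Fin r => x (i + 1)) fun j => κ j + j.rev, mul_sum, mul_sum]
    refine sum_congr rfl fun κ hκ => ?_
    obtain ⟨hκ0, hκ⟩ := (mem_interlacing h0).mp hκ
    rw [ih (antitone_of_interlaces hκ) hκ0]
    ring

end Tableaux

/-! ### Coefficients of Schur polynomials -/

section Coefficients

open MvPolynomial (X C coeff rename)

lemma coeff_prod_X {σ α R : Type*} [DecidableEq σ] [CommSemiring R] (s : Finset α) (f : α → σ)
    (μ : σ →₀ ℕ) :
    coeff μ (∏ c ∈ s, X (f c) : MvPolynomial σ R) =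
      if ∀ i, #{c ∈ s | f c = i} = μ i then 1 else 0 := by
  have hprod : (∏ c ∈ s, X (f c) : MvPolynomial σ R) =
      MvPolynomial.monomial (∑ c ∈ s, Finsupp.single (f c) 1) 1 := by
    simp [MvPolynomial.monomial_sum_one, X]
  have happly (i : σ) : (∑ c ∈ s, Finsupp.single (f c) 1 : σ →₀ ℕ) i = #{c ∈ s | f c = i} := by
    simp [Finsupp.finsetSum_apply, Finsupp.single_apply]
  simp only [hprod, MvPolynomial.coeff_monomial, Finsupp.ext_iff, happly]

lemma coeff_sum_prod_X {σ α R : Type*} [DecidableEq σ] [CommSemiring R]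
    {S : Finset (α → σ)} {s : Finset α} {D : Finset σ} {P : (α → σ) → Prop}
    (hS : ∀ f, f ∈ S ↔ P f ∧ ∀ c ∈ s, f c ∈ D) (μ : σ →₀ ℕ) :
    coeff μ (∑ f ∈ S, ∏ c ∈ s, X (f c) : MvPolynomial σ R) =
      if μ.support ⊆ D then
        (Nat.card {f : α → σ // P f ∧ ∀ i, #{c ∈ s | f c = i} = μ i} : R) else 0 := by
  simp only [MvPolynomial.coeff_sum, coeff_prod_X, sum_boole]
  split_ifs with hμ
  · rw [Nat.subtype_card]
    intro f
    simp only [mem_filter, hS, and_congr_left_iff, and_iff_left_iff_imp]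
    refine fun hweight _ c hc => hμ (Finsupp.mem_support_iff.mpr ?_)
    rw [← hweight (f c)]
    exact card_ne_zero_of_mem (mem_filter.mpr ⟨hc, rfl⟩)
  · rw [filter_eq_empty_iff.mpr, card_empty, Nat.cast_zero]
    refine fun f hf hweight => hμ fun i hi => ?_
    rw [Finsupp.mem_support_iff, ← hweight i] at hi
    obtain ⟨c, hc⟩ := card_ne_zero.mp hi
    rw [mem_filter] at hc
    exact hc.2 ▸ ((hS f).mp hf).2 c hc.1

lemma map_alternant {R S ι : Type*} [CommRing R] [CommRing S] [Fintype ι] [DecidableEq ι]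
    (φ : R →+* S) (y : ι → R) (α : ι → ℕ) : φ (alternant y α) = alternant (fun i => φ (y i)) α := by
  rw [alternant, alternant, RingHom.map_det]
  congr 1
  ext
  simp

variable {r : ℕ}

lemma coeff_alternant_X {α β : Fin r → ℕ} (hα : StrictAnti α) (hβ : StrictAnti β) :
    coeff (Finsupp.equivFunOnFinite.symm β) (alternant X α : MvPolynomial (Fin r) ℚ) =
      if α = β then 1 else 0 := by
  have hterm (σ : Equiv.Perm (Fin r)) :
      coeff (Finsupp.equivFunOnFinite.symm β)
        (((σ.sign : ℤ) : MvPolynomial (Fin r) ℚ) * ∏ i, (X (σ i) : MvPolynomial (Fin r) ℚ) ^ α i) =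
      (σ.sign : ℤ) * if α ∘ σ.symm = β then 1 else 0 := by
    have hprod : (∏ i, X (σ i) ^ α i : MvPolynomial (Fin r) ℚ) =
        MvPolynomial.monomial (Finsupp.equivFunOnFinite.symm (α ∘ σ.symm)) 1 := by
      rw [MvPolynomial.monomial_eq, Finsupp.prod_fintype _ _ (by simp),
        ← Equiv.prod_comp σ fun i => (X i : MvPolynomial (Fin r) ℚ) ^
          Finsupp.equivFunOnFinite.symm (α ∘ σ.symm) i]
      simp
    rw [hprod, ← map_intCast (C : ℚ →+* _), MvPolynomial.coeff_C_mul,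
      MvPolynomial.coeff_monomial]
    simp
  simp only [alternant_eq_sum_perm, MvPolynomial.coeff_sum, hterm]
  rw [sum_eq_single 1]
  · simp [show ⇑(1 : Equiv.Perm (Fin r)).symm = id from rfl]
  · refine fun σ _ hσ => ?_
    rw [if_neg, mul_zero]
    rintro rfl
    have heq : α = α ∘ σ.symm := (hα.range_inj hβ).mp (σ.symm.surjective.range_comp α).symm
    exact hσ (Equiv.ext fun i => hα.injective (by simpa using congrFun heq (σ i)))
  · simp

lemma coeff_alternant {σ : Type*} (e : Fin r ↪ σ) {α β : Fin r → ℕ} (hα : StrictAnti α)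
    (hβ : StrictAnti β) :
    coeff (Finsupp.embDomain e (Finsupp.equivFunOnFinite.symm β))
      (alternant (fun i => X (e i)) α : MvPolynomial σ ℚ) = if α = β then 1 else 0 := by
  rw [← coeff_alternant_X hα hβ, ← MvPolynomial.coeff_rename_embDomain e]
  congr 1
  simpa using (map_alternant (rename e : MvPolynomial (Fin r) ℚ →ₐ[ℚ] _).toRingHom X α).symm

lemma coeff_nonneg_of_mem_alternantCone {σ : Type*} (e : Fin r ↪ σ) {β : Fin r → ℕ}
    (hβ : StrictAnti β) {F : MvPolynomial σ ℚ} (hF : F ∈ alternantCone fun i => X (e i)) :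
    0 ≤ coeff (Finsupp.embDomain e (Finsupp.equivFunOnFinite.symm β)) F := by
  induction hF using AddSubmonoid.closure_induction with
  | mem F hF =>
    obtain ⟨α, hα, rfl⟩ := hF
    rw [coeff_alternant e hα hβ]
    split_ifs <;> simp
  | zero => simp
  | add F G _ _ hF hG =>
    rw [MvPolynomial.coeff_add]
    exact add_nonneg hF hG

end Coefficients

section RowLengths

variable {N : ℕ}

lemma rowLen_antitone (lam : Nat.Partition N) : Antitone (rowLen lam) := by
  have hsorted : (lam.parts.sort (· ≤ ·)).reverse.Pairwise (fun a b => b ≤ a) := by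
    rw [List.pairwise_reverse]
    exact Multiset.pairwise_sort _ _
  refine fun i j hij => ?_
  unfold rowLen
  rcases hij.eq_or_lt with rfl | hlt
  · rfl
  · rw [List.pairwise_iff_getElem] at hsorted
    grind

lemma rowLen_eq_zero (lam : Nat.Partition N) {i : ℕ} (hi : N ≤ i) : rowLen lam i = 0 := by
  have hcard : lam.parts.card • 1 ≤ lam.parts.sum :=
    Multiset.card_nsmul_le_sum fun _ hx => lam.parts_pos hx
  rw [lam.parts_sum, smul_eq_mul, mul_one] at hcard
  exact List.getD_eq_default _ _ (by simpa using hcard.trans hi)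

lemma eq_of_forall_getD_eq {l l' : List ℕ} (hl : ∀ a ∈ l, 0 < a) (hl' : ∀ a ∈ l', 0 < a)
    (h : ∀ i, l.getD i 0 = l'.getD i 0) : l = l' := by
  refine List.ext_getElem? fun i => ?_
  specialize h i
  have hpos (a : ℕ) (ha : l[i]? = some a) : 0 < a := hl a (List.mem_of_getElem? ha)
  have hpos' (a : ℕ) (ha : l'[i]? = some a) : 0 < a := hl' a (List.mem_of_getElem? ha)
  rw [List.getD_eq_getElem?_getD, List.getD_eq_getElem?_getD] at h
  cases hi : l[i]? <;> cases hi' : l'[i]? <;> grind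

lemma rowLen_injective : Function.Injective (rowLen : Nat.Partition N → ℕ → ℕ) := by
  intro lam nu h
  have hpos (p : Nat.Partition N) : ∀ a ∈ (p.parts.sort (· ≤ ·)).reverse, 0 < a :=
    fun a ha => p.parts_pos (by simpa using ha)
  have hlist := List.reverse_injective (eq_of_forall_getD_eq (hpos lam) (hpos nu) (congrFun h))
  refine Nat.Partition.ext ?_
  rw [← Multiset.sort_eq lam.parts (· ≤ ·), hlist, Multiset.sort_eq]

end RowLengths

section SchurCoefficients

open MvPolynomial (X C coeff)

variable {N r : ℕ}

lemma isSSYT_iff_isTableau {lam : Nat.Partition N} {t : Cell → ℕ} :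
    IsSSYT lam t ↔ IsTableau (rowLen lam) t :=
  ⟨fun ⟨hzero, hpos, hrow, hcol⟩ => ⟨hzero, hpos, hrow, hcol⟩,
    fun ht => ⟨ht.eq_zero, ht.pos, ht.row_le, ht.col_lt⟩⟩

lemma coeff_schurPoly_rowLen {lam : Nat.Partition N} (hN : N ≤ r) (μ : ℕ →₀ ℕ) :
    coeff μ (schurPoly X r (rowLen lam) : MvPolynomial ℕ ℚ) =
      if μ.support ⊆ Icc 1 r then schurFn lam μ else 0 := by
  have h0 : ∀ i, r ≤ i → rowLen lam i = 0 := fun i hi => rowLen_eq_zero lam (hN.trans hi)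
  have hcells (c : Cell) : c ∈ youngCells r (rowLen lam) ↔ c ∈ diag lam := by
    rw [mem_youngCells]
    exact and_iff_right_of_imp fun hc => by_contra fun h => by simp [h0 c.1 (by lia)] at hc
  have htableaux (t : Cell → ℕ) : t ∈ tableaux r (rowLen lam) ↔
      IsSSYT lam t ∧ ∀ c ∈ youngCells r (rowLen lam), t c ∈ Icc 1 r := by
    simp only [mem_tableaux h0, isSSYT_iff_isTableau, hcells, mem_Icc]
    refine and_congr_right fun ht => ⟨fun h c hc => ⟨ht.pos c hc, h c⟩, fun h c => ?_⟩
    by_cases hc : c ∈ diag lam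
    · exact (h c hc).2
    · simp [ht.eq_zero c hc]
  have hcard (t : Cell → ℕ) (i : ℕ) : Nat.card {c : Cell // c ∈ diag lam ∧ t c = i} =
      #{c ∈ youngCells r (rowLen lam) | t c = i} :=
    Nat.subtype_card _ fun c => by rw [mem_filter, hcells]
  simp only [schurPoly, coeff_sum_prod_X htableaux, schurFn, hcard]

/-- The proper colorings of `G` with colors `1, …, r`. -/
noncomputable def boundedColorings {V : Type*} [Fintype V] (G : SimpleGraph V) (r : ℕ) :
    Finset (V → ℕ) :=
  {f ∈ Fintype.piFinset fun _ => Icc 1 r | IsProperColoring G f}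

lemma mem_boundedColorings {V : Type*} [Fintype V] {G : SimpleGraph V} {f : V → ℕ} :
    f ∈ boundedColorings G r ↔ IsProperColoring G f ∧ ∀ v, f v ∈ Icc 1 r := by
  simp [boundedColorings, and_comm]

/-- The chromatic symmetric function of `G` in the variables `x 1, …, x r`. -/
noncomputable def chromaticPoly {R V : Type*} [CommSemiring R] [Fintype V] (G : SimpleGraph V)
    (x : ℕ → R) (r : ℕ) : R :=
  ∑ f ∈ boundedColorings G r, ∏ v, x (f v)

lemma coeff_chromaticPoly {V : Type*} [Fintype V] (G : SimpleGraph V) (μ : ℕ →₀ ℕ) :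
    coeff μ (chromaticPoly G X r : MvPolynomial ℕ ℚ) =
      if μ.support ⊆ Icc 1 r then XCoeff G μ else 0 := by
  have hmem (f : V → ℕ) :
      f ∈ boundedColorings G r ↔ IsProperColoring G f ∧ ∀ v ∈ univ, f v ∈ Icc 1 r := by
    simp [mem_boundedColorings]
  have hcard (f : V → ℕ) (i : ℕ) : Nat.card {v // f v = i} = #{v | f v = i} :=
    Nat.subtype_card _ fun v => by simp
  simp only [chromaticPoly, coeff_sum_prod_X hmem, XCoeff, hcard]

/-- The embedding `i ↦ i + 1`, which matches the `0`-indexed rows of a determinant with the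
variables `x 1, …, x r`. -/
def succEmbedding (r : ℕ) : Fin r ↪ ℕ := Fin.valEmbedding.trans (addRightEmbedding 1)

lemma map_succEmbedding_univ (r : ℕ) : univ.map (succEmbedding r) = Icc 1 r := by
  rw [succEmbedding, ← map_map, Fin.map_valEmbedding_univ, Nat.Iio_eq_range, range_eq_Ico,
    map_add_right_Ico, zero_add]
  rfl

lemma strictAnti_add_rev {ν : ℕ → ℕ} (hν : Antitone ν) :
    StrictAnti fun j : Fin r => ν j + j.rev :=
  (hν.comp_monotone Fin.val_strictMono.monotone).add_strictAnti fun _ _ => Fin.rev_lt_rev.mpr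

lemma coeff_alternant_rev_mul_schurPoly (hN : N ≤ r) (lam ν : Nat.Partition N) :
    coeff (Finsupp.embDomain (succEmbedding r)
        (Finsupp.equivFunOnFinite.symm fun j => rowLen lam j + j.rev))
      (alternant (fun i => X (succEmbedding r i)) (fun i => i.rev) * schurPoly X r (rowLen ν) :
        MvPolynomial ℕ ℚ) = if ν = lam then 1 else 0 := by
  refine (congrArg _ (alternant_add_rev_eq_alternant_rev_mul_schurPoly X (rowLen_antitone ν)
    fun i hi => rowLen_eq_zero ν (hN.trans hi))).symm.trans
    ((coeff_alternant (succEmbedding r) (strictAnti_add_rev (rowLen_antitone ν))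
      (strictAnti_add_rev (rowLen_antitone lam))).trans (if_congr ?_ rfl rfl))
  refine ⟨fun h => rowLen_injective (funext fun i => ?_), fun h => h ▸ rfl⟩
  by_cases hi : i < r
  · exact Nat.add_right_cancel (congrFun h ⟨i, hi⟩)
  · rw [rowLen_eq_zero ν (by lia), rowLen_eq_zero lam (by lia)]

lemma eq_sum_C_mul_schurPoly (hN : N ≤ r) {f : (ℕ → ℕ) → ℚ} {F : MvPolynomial ℕ ℚ}
    (hF : ∀ μ : ℕ →₀ ℕ, coeff μ F = if μ.support ⊆ Icc 1 r then f μ else 0)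
    {c : Nat.Partition N →₀ ℚ} (hc : ∀ μ, f μ = c.sum fun ν a => a * schurFn ν μ) :
    F = c.sum fun ν a => C a * schurPoly X r (rowLen ν) := by
  ext μ
  rw [hF, hc]
  simp only [Finsupp.sum, MvPolynomial.coeff_sum, MvPolynomial.coeff_C_mul,
    coeff_schurPoly_rowLen hN]
  split_ifs <;> simp

lemma sCoeff_nonneg_of_mul_alternant_mem_cone (hN : N ≤ r) {f : (ℕ → ℕ) → ℚ}
    {F : MvPolynomial ℕ ℚ}
    (hF : ∀ μ : ℕ →₀ ℕ, coeff μ F = if μ.support ⊆ Icc 1 r then f μ else 0)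
    (hmem : F * alternant (fun i => X (succEmbedding r i)) (fun i => i.rev) ∈
      alternantCone fun i => X (succEmbedding r i))
    (lam : Nat.Partition N) : 0 ≤ sCoeff f lam := by
  rw [sCoeff]
  split_ifs with h
  · have hnonneg := coeff_nonneg_of_mem_alternantCone (succEmbedding r)
      (strictAnti_add_rev (rowLen_antitone lam)) hmem
    rw [eq_sum_C_mul_schurPoly hN hF h.choose_spec, mul_comm, Finsupp.sum, mul_sum,
      MvPolynomial.coeff_sum] at hnonneg
    simp only [mul_left_comm _ (C _), MvPolynomial.coeff_C_mul,
      coeff_alternant_rev_mul_schurPoly hN, mul_ite, mul_one, mul_zero, sum_ite_eq',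
      Finsupp.if_mem_support] at hnonneg
    exact hnonneg
  · rfl

end SchurCoefficients

/-! ### Colorings of generalized nets -/

section Colorings

variable {R σ : Type*} [CommRing R] [DecidableEq σ]

/-- The injective functions `ι → σ` with values in `s`. -/
noncomputable def injectionsInto (ι : Type*) [Fintype ι] (s : Finset σ) : Finset (ι → σ) :=
  {g ∈ Fintype.piFinset fun _ => s | Function.Injective g}

lemma mem_injectionsInto {ι : Type*} [Fintype ι] {s : Finset σ} {g : ι → σ} :
    g ∈ injectionsInto ι s ↔ (∀ i, g i ∈ s) ∧ Function.Injective g := by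
  simp [injectionsInto]

lemma card_filter_image_eq {ι : Type*} [Fintype ι] {s A : Finset σ} (hA : A ⊆ s)
    (hcard : #A = Fintype.card ι) :
    #{g ∈ injectionsInto ι s | univ.image g = A} = (Fintype.card ι).factorial := by
  have hfiber : {g ∈ injectionsInto ι s | univ.image g = A} =
      (univ : Finset (ι ↪ A)).image fun e i => (e i : σ) := by
    ext g
    simp only [mem_filter, mem_injectionsInto, mem_image, mem_univ, true_and]
    constructor
    · rintro ⟨⟨-, hg⟩, rfl⟩
      exact ⟨⟨fun i => ⟨g i, mem_image_of_mem g (mem_univ i)⟩,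
        fun i j h => hg (congrArg Subtype.val h)⟩, rfl⟩
    · rintro ⟨e, rfl⟩
      have hinj := Subtype.val_injective.comp e.injective
      refine ⟨⟨fun i => hA (e i).2, hinj⟩, eq_of_subset_of_card_le ?_ ?_⟩
      · exact image_subset_iff.mpr fun i _ => (e i).2
      · exact (hcard.trans (card_image_of_injective univ hinj).symm).le
  rw [hfiber, card_image_of_injective, card_univ, Fintype.card_embedding_eq, Fintype.card_coe,
    hcard, Nat.descFactorial_self]
  exact fun e e' h => DFunLike.ext _ _ fun i => Subtype.ext (congrFun h i)

lemma sum_injectionsInto_image (ι : Type*) [Fintype ι] (s : Finset σ) (F : Finset σ → R) :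
    ∑ g ∈ injectionsInto ι s, F (univ.image g) =
      (Fintype.card ι).factorial * ∑ A ∈ s.powersetCard (Fintype.card ι), F A := by
  have hmaps : ∀ g ∈ injectionsInto ι s, univ.image g ∈ s.powersetCard (Fintype.card ι) := by
    intro g hg
    rw [mem_injectionsInto] at hg
    rw [mem_powersetCard, card_image_of_injective _ hg.2, card_univ]
    exact ⟨image_subset_iff.mpr fun i _ => hg.1 i, rfl⟩
  rw [← sum_fiberwise_of_maps_to hmaps, mul_sum]
  refine sum_congr rfl fun A hA => ?_
  rw [mem_powersetCard] at hA
  rw [sum_congr rfl fun g hg => congrArg F (mem_filter.mp hg).2, sum_const,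
    card_filter_image_eq hA.1 hA.2, nsmul_eq_mul]

lemma append_mem_injectionsInto {s : Finset σ} {m b : ℕ} {g : Fin m → σ} {h : Fin b → σ} :
    Fin.append g h ∈ injectionsInto (Fin (m + b)) s ↔
      g ∈ injectionsInto (Fin m) s ∧ h ∈ injectionsInto (Fin b) (s \ univ.image g) := by
  simp only [mem_injectionsInto, Fin.append_injective_iff, Fin.forall_fin_add, Fin.append_left,
    Fin.append_right, mem_sdiff, mem_image, mem_univ, true_and, not_exists, forall_and]
  rw [forall_comm (α := Fin m)]
  tauto

lemma sum_injectionsInto_fin_add {M : Type*} [AddCommMonoid M] (s : Finset σ) (m b : ℕ)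
    (F : (Fin (m + b) → σ) → M) :
    ∑ f ∈ injectionsInto (Fin (m + b)) s, F f =
      ∑ g ∈ injectionsInto (Fin m) s, ∑ h ∈ injectionsInto (Fin b) (s \ univ.image g),
        F (Fin.append g h) := by
  rw [sum_sigma']
  symm
  refine sum_equiv ((Equiv.sigmaEquivProd _ _).trans (Fin.appendEquiv m b)) ?_ fun _ _ => rfl
  exact fun p => mem_sigma.trans append_mem_injectionsInto.symm

lemma sum_injectionsInto_prod (v : σ → R) (s : Finset σ) (b : ℕ) :
    ∑ g ∈ injectionsInto (Fin b) s, ∏ i, v (g i) = b.factorial * esymmOn v s b := by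
  have himage := sum_injectionsInto_image (Fin b) s fun A => ∏ i ∈ A, v i
  rw [Fintype.card_fin, ← esymmOn_eq_sum] at himage
  rw [← himage]
  exact sum_congr rfl fun g hg => (prod_image fun i _ j _ h => (mem_injectionsInto.mp hg).2 h).symm

lemma sum_injectionsInto_prod_mul_prod (u v : σ → R) (s : Finset σ) (m b : ℕ) :
    ∑ g ∈ injectionsInto (Fin (m + b)) s,
        (∏ i : Fin m, u (g (Fin.castAdd b i))) * ∏ i : Fin b, v (g (Fin.natAdd m i)) =
      (m.factorial * b.factorial : ℕ) * pairSum u v s m b := by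
  have himage := sum_injectionsInto_image (Fin m) s fun A =>
    (∏ i ∈ A, u i) * (b.factorial * esymmOn v (s \ A) b)
  rw [Fintype.card_fin] at himage
  simp only [sum_injectionsInto_fin_add, Fin.append_left, Fin.append_right, ← mul_sum,
    sum_injectionsInto_prod]
  rw [pairSum, Nat.cast_mul, mul_assoc, mul_sum]
  simp only [mul_left_comm (b.factorial : R)]
  rw [← himage]
  refine sum_congr rfl fun g hg => ?_
  rw [prod_image fun i _ j _ h => (mem_injectionsInto.mp hg).2 h]

lemma pairSum_map {τ : Type*} [DecidableEq τ] (e : τ ↪ σ) (u v : σ → R) (s : Finset τ) (a b : ℕ) :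
    pairSum u v (s.map e) a b = pairSum (fun i => u (e i)) (fun i => v (e i)) s a b := by
  simp only [pairSum, powersetCard_map, sum_map, RelEmbedding.coe_toEmbedding, mapEmbedding_apply,
    prod_map, ← Finset.map_sdiff, esymmOn, map_val, Multiset.map_map, Function.comp_def]

lemma isProperColoring_genNet_iff {m b : ℕ} {f : Fin (m + b) ⊕ Fin m → ℕ} :
    IsProperColoring (genNet (m + b) m) f ↔ (∀ v, 0 < f v) ∧
      Function.Injective (fun i => f (Sum.inl i)) ∧
      ∀ j : Fin m, f (Sum.inr j) ≠ f (Sum.inl (Fin.castAdd b j)) := by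
  have hbody (i j : Fin (m + b)) :
      (genNet (m + b) m).Adj (Sum.inl i) (Sum.inl j) ↔ i ≠ j := by simp [genNet]
  have hpendant (i : Fin (m + b)) (j : Fin m) :
      (genNet (m + b) m).Adj (Sum.inl i) (Sum.inr j) ↔ i = Fin.castAdd b j := by
    simp [genNet, Fin.ext_iff]
  have hpendants (i j : Fin m) : ¬ (genNet (m + b) m).Adj (Sum.inr i) (Sum.inr j) := by
    simp [genNet]
  simp only [IsProperColoring, Sum.forall, hbody, hpendant, hpendants,
    SimpleGraph.adj_comm _ (Sum.inr _) (Sum.inl _), Function.Injective, ne_eq, not_imp_not]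
  grind

lemma chromaticPoly_genNet (x : ℕ → R) (r m b : ℕ) :
    chromaticPoly (genNet (m + b) m) x r = (m.factorial * b.factorial : ℕ) *
      pairSum (fun i => (∑ k ∈ Icc 1 r, x k) * x i - x i ^ 2) x (Icc 1 r) m b := by
  have hmem (g : Fin (m + b) → ℕ) (h : Fin m → ℕ) :
      Sum.elim g h ∈ boundedColorings (genNet (m + b) m) r ↔
        g ∈ injectionsInto (Fin (m + b)) (Icc 1 r) ∧
          h ∈ Fintype.piFinset fun j => (Icc 1 r).erase (g (Fin.castAdd b j)) := by
    simp only [mem_boundedColorings, Fintype.mem_piFinset, isProperColoring_genNet_iff,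
      mem_injectionsInto, Sum.forall, Sum.elim_inl, Sum.elim_inr, mem_erase, forall_and, mem_Icc]
    tauto
  have hsplit : chromaticPoly (genNet (m + b) m) x r =
      ∑ g ∈ injectionsInto (Fin (m + b)) (Icc 1 r),
        ∑ h ∈ Fintype.piFinset fun j => (Icc 1 r).erase (g (Fin.castAdd b j)),
          (∏ i, x (g i)) * ∏ j, x (h j) := by
    rw [chromaticPoly, sum_sigma']
    symm
    refine sum_equiv ((Equiv.sigmaEquivProd _ _).trans (Equiv.sumArrowEquivProdArrow _ _ _).symm)
      (fun p => mem_sigma.trans (hmem p.1 p.2).symm) fun p _ => ?_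
    simp
  rw [hsplit, ← sum_injectionsInto_prod_mul_prod]
  refine sum_congr rfl fun g hg => ?_
  have hpendant (j : Fin m) : ∑ c ∈ (Icc 1 r).erase (g (Fin.castAdd b j)), x c =
      ∑ k ∈ Icc 1 r, x k - x (g (Fin.castAdd b j)) :=
    sum_erase_eq_sub ((mem_injectionsInto.mp hg).1 _)
  rw [← mul_sum, ← prod_univ_sum, Fin.prod_univ_add, mul_right_comm, ← prod_mul_distrib]
  congr 1
  refine prod_congr rfl fun j _ => ?_
  rw [hpendant]
  ring

end Colorings

lemma chromaticPoly_genNet_mul_alternant_mem_cone {R : Type*} [CommRing R] (x : ℕ → R)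
    {r m b : ℕ} (hr : m + b + m ≤ r) :
    chromaticPoly (genNet (m + b) m) x r *
        alternant (fun i => x (succEmbedding r i)) (fun i => i.rev) ∈
      alternantCone fun i => x (succEmbedding r i) := by
  rw [chromaticPoly_genNet, ← map_succEmbedding_univ, sum_map, pairSum_map, mul_assoc,
    ← nsmul_eq_mul]
  exact nsmul_mem (pairSum_mul_alternant_rev_mem_cone _ hr) _

/-- For `n ≥ 1` and `n ≥ m ≥ 0`, the generalized net `GN_{n,m}` is
Schur-positive: every Schur coefficient of its chromatic symmetric function is
nonnegative. -/
theorem genNet_schur_positive (n m : ℕ) (hn : 1 ≤ n) (hm : m ≤ n)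
    (lam : Nat.Partition (n + m)) :
    0 ≤ sCoeff (XCoeff (genNet n m)) lam := by
  obtain ⟨b, rfl⟩ := Nat.exists_eq_add_of_le hm
  exact sCoeff_nonneg_of_mul_alternant_mem_cone le_rfl (coeff_chromaticPoly _)
    (chromaticPoly_genNet_mul_alternant_mem_cone MvPolynomial.X le_rfl) lam
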